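/- arXiv:2502.20055 — 11 statements merged into one kernel-verified Lean document; each statement's English description precedes it below -/
import Mathlib

section
/- The map θ ↦ ρ_θ from ℝ into 2×2 complex matrices defined by ρ_θ = (1/2)I₂ + (1/2)exp(−1/θ²)·[[cos(2/θ), sin(2/θ)],[sin(2/θ), −cos(2/θ)]] for θ ≠ 0 and ρ_0 = (1/2)I₂ is infinitely differentiable (C^∞) on all of ℝ (equivalently, each of its four entry functions ℝ → ℂ is C^∞). -/
open Matrix

/-- The family of 2×2 density matrices: `ρ_θ = (1/2)I₂ + (1/2)exp(−1/θ²)·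
[[cos(2/θ), sin(2/θ)],[sin(2/θ), −cos(2/θ)]]` for `θ ≠ 0`, and `ρ_0 = (1/2)I₂`. -/
noncomputable def rho (θ : ℝ) : Matrix (Fin 2) (Fin 2) ℂ :=
  if θ = 0 then (1 / 2 : ℂ) • 1
  else
    (1 / 2 : ℂ) • 1 +
      ((1 / 2 : ℝ) * Real.exp (-1 / θ ^ 2) : ℝ) •
        !![(Real.cos (2 / θ) : ℂ), (Real.sin (2 / θ) : ℂ);
           (Real.sin (2 / θ) : ℂ), (-Real.cos (2 / θ) : ℂ)]

open Polynomial Filter Topology in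
theorem aux_tendsto_poly (p : ℝ[X]) :
    Tendsto (fun x : ℝ => p.eval x⁻¹ * expNegInvGlue (x ^ 2)) (𝓝 0) (𝓝 0) := by
  induction p using Polynomial.induction_on' with
  | add p q hp hq => simpa [add_mul] using hp.add hq
  | monomial n a =>
    have h0 : Tendsto (fun x : ℝ => x ^ 2) (𝓝 0) (𝓝 0) := by
      have : Continuous (fun x : ℝ => x ^ 2) := by fun_prop
      simpa using this.tendsto 0
    have h1 := (expNegInvGlue.tendsto_polynomial_inv_mul_zero (monomial n a)).comp h0
    have h2 : Tendsto (fun x : ℝ => x ^ n) (𝓝 0) (𝓝 (0 ^ n)) := by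
      have : Continuous (fun x : ℝ => x ^ n) := by fun_prop
      exact this.tendsto 0
    have h3 := h2.mul h1
    rw [mul_zero] at h3
    refine h3.congr fun x => ?_
    by_cases hx : x = 0
    · simp [hx]
    · simp only [Function.comp, eval_monomial]
      have : (x ^ n) * ((x ^ 2)⁻¹) ^ n = x⁻¹ ^ n := by
        rw [← mul_pow]; congr 1; field_simp
      rw [← this]; ring

/-- Auxiliary family closed under differentiation. -/
noncomputable def auxG (p q : Polynomial ℝ) (x : ℝ) : ℝ :=
  (p.eval x⁻¹ * Real.cos (2 * x⁻¹) + q.eval x⁻¹ * Real.sin (2 * x⁻¹)) * expNegInvGlue (x ^ 2)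

open Polynomial Filter Topology in
theorem auxG_tendsto (p q : ℝ[X]) : Tendsto (auxG p q) (𝓝 0) (𝓝 0) := by
  have h := (aux_tendsto_poly p).abs.add (aux_tendsto_poly q).abs
  simp only [abs_zero, add_zero] at h
  refine squeeze_zero_norm (fun x => ?_) h
  have e : auxG p q x = (p.eval x⁻¹ * expNegInvGlue (x ^ 2)) * Real.cos (2 * x⁻¹)
      + (q.eval x⁻¹ * expNegInvGlue (x ^ 2)) * Real.sin (2 * x⁻¹) := by
    unfold auxG; ring
  rw [e, Real.norm_eq_abs]
  refine (abs_add_le _ _).trans (add_le_add ?_ ?_)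
  · rw [abs_mul]
    exact mul_le_of_le_one_right (abs_nonneg _) (Real.abs_cos_le_one _)
  · rw [abs_mul]
    exact mul_le_of_le_one_right (abs_nonneg _) (Real.abs_sin_le_one _)

open Polynomial Filter Topology in
theorem auxG_hasDerivAt (p q : ℝ[X]) (x : ℝ) :
    HasDerivAt (auxG p q)
      (auxG (-X ^ 2 * (derivative p + 2 * q - 2 * X * p))
        (-X ^ 2 * (derivative q - 2 * p - 2 * X * q)) x) x := by
  by_cases hx : x = 0
  · subst hx
    have e0 : ∀ p q, auxG p q 0 = 0 := fun p q => by simp [auxG]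
    rw [e0, hasDerivAt_iff_tendsto_slope]
    refine ((auxG_tendsto (p * X) (q * X)).mono_left inf_le_left).congr fun x => ?_
    rw [slope_def_field, e0]
    simp only [auxG, eval_mul, eval_X, sub_zero, div_eq_mul_inv]
    ring
  · have hc : HasDerivAt (fun u : ℝ => Real.cos (2 * u)) (-Real.sin (2 * x⁻¹) * (2 * 1)) x⁻¹ :=
      ((hasDerivAt_id x⁻¹).const_mul 2).cos
    have hs : HasDerivAt (fun u : ℝ => Real.sin (2 * u)) (Real.cos (2 * x⁻¹) * (2 * 1)) x⁻¹ :=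
      ((hasDerivAt_id x⁻¹).const_mul 2).sin
    have he : HasDerivAt (fun u : ℝ => Real.exp (-(u ^ 2)))
        (Real.exp (-(x⁻¹ ^ 2)) * (-(2 * x⁻¹))) x⁻¹ := by
      simpa using (hasDerivAt_pow 2 x⁻¹).neg.exp
    have h := ((((p.hasDerivAt x⁻¹).mul hc).add ((q.hasDerivAt x⁻¹).mul hs)).mul he).comp x
      (hasDerivAt_inv hx)
    have hE : ∀ y : ℝ, y ≠ 0 → expNegInvGlue (y ^ 2) = Real.exp (-(y⁻¹ ^ 2)) := fun y hy => by
      have : 0 < y ^ 2 := by positivity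
      simp [expNegInvGlue, this.not_ge]
    have h' := h.congr_of_eventuallyEq (f₁ := auxG p q) (by
      filter_upwards [isOpen_ne.mem_nhds hx] with y hy
      simp [auxG, hE y hy])
    refine h'.congr_deriv ?_
    simp only [auxG, hE x hx, eval_mul, eval_neg, eval_pow, eval_X, eval_sub, eval_add,
      eval_ofNat, Pi.add_apply, Pi.mul_apply]
    rw [← inv_pow]
    ring

theorem auxG_contDiff (p q : Polynomial ℝ) : ContDiff ℝ (⊤ : ℕ∞) (auxG p q) := by
  apply contDiff_all_iff_nat.2 (fun m => ?_) (⊤ : ℕ∞)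
  induction m generalizing p q with
  | zero =>
    exact contDiff_zero.2 (continuous_iff_continuousAt.2
      fun x => (auxG_hasDerivAt p q x).continuousAt)
  | succ m ihm =>
    rw [show ((m + 1 : ℕ) : WithTop ℕ∞) = m + 1 from rfl]
    refine contDiff_succ_iff_deriv.2
      ⟨fun x => (auxG_hasDerivAt p q x).differentiableAt, by simp, ?_⟩
    rw [show deriv (auxG p q) = _ from funext fun x => (auxG_hasDerivAt p q x).deriv]
    exact ihm _ _

theorem aux_rho (c : ℂ) (p q : Polynomial ℝ) :
    ContDiff ℝ (⊤ : ℕ∞) (fun θ : ℝ => c + ((auxG p q θ : ℝ) : ℂ)) :=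
  contDiff_const.add (Complex.ofRealCLM.contDiff.comp (auxG_contDiff p q))

theorem aux_E (y : ℝ) (hy : y ≠ 0) : expNegInvGlue (y ^ 2) = Real.exp (-1 / y ^ 2) := by
  have : 0 < y ^ 2 := by positivity
  simp [expNegInvGlue, this.not_ge, neg_div]

/-- The map `θ ↦ ρ_θ` is infinitely differentiable on all of `ℝ`, in the sense that each
of its four entry functions `ℝ → ℂ` is `C^∞`. -/
theorem rho_contDiff : ∀ i j : Fin 2, ContDiff ℝ (⊤ : ℕ∞) (fun θ : ℝ => rho θ i j) := by
  intro i j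
  have key : ∃ (c : ℂ) (p q : Polynomial ℝ),
      ∀ θ : ℝ, rho θ i j = c + ((auxG p q θ : ℝ) : ℂ) := by
    fin_cases i <;> fin_cases j
    · refine ⟨1 / 2, Polynomial.C (1 / 2), 0, fun θ => ?_⟩
      by_cases h : θ = 0
      · simp [rho, auxG, h]
      · simp [rho, auxG, h, aux_E θ h, div_eq_mul_inv]; ring
    · refine ⟨0, 0, Polynomial.C (1 / 2), fun θ => ?_⟩
      by_cases h : θ = 0
      · simp [rho, auxG, h]
      · simp [rho, auxG, h, aux_E θ h, div_eq_mul_inv]; ring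
    · refine ⟨0, 0, Polynomial.C (1 / 2), fun θ => ?_⟩
      by_cases h : θ = 0
      · simp [rho, auxG, h]
      · simp [rho, auxG, h, aux_E θ h, div_eq_mul_inv]; ring
    · refine ⟨1 / 2, Polynomial.C (-1 / 2), 0, fun θ => ?_⟩
      by_cases h : θ = 0
      · simp [rho, auxG, h]
      · simp [rho, auxG, h, aux_E θ h, div_eq_mul_inv]; ring
  obtain ⟨c, p, q, h⟩ := key
  simp only [h]
  exact aux_rho c p q
end

section
/- Let P₁(θ) = [[cos²(1/θ), cos(1/θ)sin(1/θ)],[cos(1/θ)sin(1/θ), sin²(1/θ)]] for θ ≠ 0. Then P₁(θ) has no limit as θ → 0: there exists no 2×2 complex matrix Q such that P₁(θ) converges (entrywise) to Q as θ → 0 through nonzero values. Consequently the eigenprojection family of the smooth state family ρ_θ = λ₁(θ)P₁(θ) + λ₂(θ)(I₂ − P₁(θ)) admits no continuous extension to θ = 0. -/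
open Matrix Filter

/-- The eigenprojection family
`P₁(θ) = [[cos²(1/θ), cos(1/θ)sin(1/θ)],[cos(1/θ)sin(1/θ), sin²(1/θ)]]` (for `θ ≠ 0`). -/
noncomputable def P1 (θ : ℝ) : Matrix (Fin 2) (Fin 2) ℂ :=
  !![(Real.cos (1 / θ) ^ 2 : ℂ), (Real.cos (1 / θ) * Real.sin (1 / θ) : ℂ);
     (Real.cos (1 / θ) * Real.sin (1 / θ) : ℂ), (Real.sin (1 / θ) ^ 2 : ℂ)]

/-- `P₁(θ)` has no limit as `θ → 0` through nonzero values: there is no 2×2 complex matrix `Q`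
to which `P₁(θ)` converges entrywise as `θ → 0`, `θ ≠ 0`.  Hence the eigenprojection family of
the smooth state family `ρ_θ = λ₁(θ)P₁(θ) + λ₂(θ)(I₂ − P₁(θ))` admits no continuous extension
to `θ = 0`. -/
theorem P1_no_limit :
    ¬ ∃ Q : Matrix (Fin 2) (Fin 2) ℂ,
      ∀ i j : Fin 2,
        Tendsto (fun θ : ℝ => P1 θ i j) (nhdsWithin 0 {0}ᶜ) (nhds (Q i j)) := by
  rintro ⟨Q, hQ⟩
  have key : ∀ c : ℝ, Q 0 0 = (Real.cos c : ℂ) ^ 2 := by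
    intro c
    have h1 : Tendsto (fun n : ℕ => c + (n : ℝ) * (2 * Real.pi)) atTop atTop :=
      tendsto_atTop_add_const_left _ _
        (tendsto_natCast_atTop_atTop.atTop_mul_const Real.two_pi_pos)
    have h2 : Tendsto (fun n : ℕ => (c + (n : ℝ) * (2 * Real.pi))⁻¹) atTop
        (nhdsWithin 0 {0}ᶜ) :=
      (tendsto_inv_atTop_nhdsGT_zero.comp h1).mono_right
        (nhdsWithin_mono _ (fun x hx => ne_of_gt hx))
    have h3 := (hQ 0 0).comp h2
    have h4 : ((fun θ : ℝ => P1 θ 0 0) ∘ fun n : ℕ => (c + (n : ℝ) * (2 * Real.pi))⁻¹)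
        = fun _ => (Real.cos c : ℂ) ^ 2 := by
      funext n
      have h5 : P1 ((c + (n : ℝ) * (2 * Real.pi))⁻¹) 0 0
          = (Real.cos (1 / (c + (n : ℝ) * (2 * Real.pi))⁻¹) : ℂ) ^ 2 := rfl
      rw [Function.comp_apply, h5, one_div, inv_inv, Real.cos_add_nat_mul_two_pi]
    rw [h4] at h3
    exact tendsto_nhds_unique h3 tendsto_const_nhds
  have a := key 0
  have b := key (Real.pi / 2)
  rw [a, Real.cos_zero, Real.cos_pi_div_two] at b
  norm_num at b
end

section
/- Let P₁, …, P_N : ℝ → M_n(ℂ) be differentiable families of Hermitian matrices satisfying P_j(θ)P_k(θ) = δ_{jk}P_j(θ) for all θ and all j, k. Then for all j, k and all θ: P_j'(θ)P_k'(θ)P_j(θ) = P_j(θ)P_k'(θ)P_j'(θ) (equivalently, (P_j'P_k')P_j = P_j(P_j'P_k')^*); in particular (taking k = j) the matrix (P_j'(θ))² commutes with P_j(θ). -/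
/-- Let `P₁, …, P_N : ℝ → Mₙ(ℂ)` be (entrywise) differentiable families of Hermitian matrices
with `P_j(θ)P_k(θ) = δ_{jk}P_j(θ)`.  Then for all `j, k` and `θ`,
`P_j'(θ)P_k'(θ)P_j(θ) = P_j(θ)P_k'(θ)P_j'(θ)`; in particular (taking `k = j`)
the matrix `(P_j'(θ))²` commutes with `P_j(θ)`. -/
theorem projection_derivative_product_identity {n N : ℕ}
    (P P' : Fin N → ℝ → Matrix (Fin n) (Fin n) ℂ)
    (hderiv : ∀ j i₁ i₂ θ, HasDerivAt (fun t => P j t i₁ i₂) (P' j θ i₁ i₂) θ)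
    (hherm : ∀ j θ, (P j θ).IsHermitian)
    (horth : ∀ j k θ, P j θ * P k θ = if j = k then P j θ else 0) :
    ∀ (j k : Fin N) (θ : ℝ),
      P' j θ * P' k θ * P j θ = P j θ * (P' k θ * P' j θ) ∧
      Commute (P' j θ * P' j θ) (P j θ) := by
  have key : ∀ (j k : Fin N) (θ : ℝ),
      P' j θ * P k θ + P j θ * P' k θ = if j = k then P' j θ else 0 := by
    intro j k θ
    ext a b
    have h1 : HasDerivAt (fun t => (P j t * P k t) a b)
        ((P' j θ * P k θ + P j θ * P' k θ) a b) θ := by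
      simp only [Matrix.add_apply, Matrix.mul_apply, ← Finset.sum_add_distrib]
      exact HasDerivAt.fun_sum fun i _ => (hderiv j a i θ).mul (hderiv k i b θ)
    have h2 : HasDerivAt (fun t => (P j t * P k t) a b)
        ((if j = k then P' j θ else 0 : Matrix (Fin n) (Fin n) ℂ) a b) θ := by
      simp only [horth]
      split_ifs with h
      · exact hderiv j a b θ
      · exact hasDerivAt_const θ (0 : ℂ)
    exact h1.unique h2
  have main : ∀ (j k : Fin N) (θ : ℝ),
      P' j θ * P' k θ * P j θ = P j θ * (P' k θ * P' j θ) := by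
    intro j k θ
    have e1 := key j k θ
    have e2 := key k j θ
    by_cases h : j = k
    · subst h
      rw [if_pos rfl] at e1
      have l : P' j θ * P j θ = P' j θ - P j θ * P' j θ := eq_sub_of_add_eq e1
      rw [mul_assoc, l, mul_sub, ← mul_assoc, ← mul_assoc, l, sub_mul]
      abel
    · rw [if_neg h] at e1
      rw [if_neg (Ne.symm h)] at e2
      rw [mul_assoc, eq_neg_of_add_eq_zero_left e2, ← mul_assoc,
        eq_neg_of_add_eq_zero_right e1, mul_neg, neg_mul, mul_assoc]
  intro j k θ
  exact ⟨main j k θ, main j j θ⟩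
end

section
/- Let ρ_θ = Σ_{k=1}^N λ_k(θ)P_k(θ) where λ_k : ℝ → (0,∞) are differentiable with λ_j(θ) ≠ λ_k(θ) for j ≠ k, and P₁, …, P_N : ℝ → M_n(ℂ) are differentiable families of Hermitian matrices with P_j(θ)P_k(θ) = δ_{jk}P_j(θ) and Σ_{k=1}^N P_k(θ) = I for all θ. Then ρ_θ commutes with its derivative ρ_θ' for every θ if and only if Σ_{k=1}^N λ_k(θ)P_k'(θ) = 0 for every θ (in which case ρ_θ' = Σ_k λ_k'(θ)P_k(θ)). -/
open Matrix

/-- Let `ρ_θ = Σ_k λ_k(θ)P_k(θ)` with `λ_k : ℝ → (0,∞)` differentiable and pairwise distinct,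
and `P_k : ℝ → Mₙ(ℂ)` a differentiable family of mutually orthogonal Hermitian projections
summing to the identity.  Then `ρ_θ` commutes with its derivative
`ρ_θ' = Σ_k λ_k'(θ)P_k(θ) + Σ_k λ_k(θ)P_k'(θ)` for every `θ` if and only if
`Σ_k λ_k(θ)P_k'(θ) = 0` for every `θ`. -/
theorem commutes_with_derivative_iff {n N : ℕ}
    (lam lam' : Fin N → ℝ → ℝ)
    (P P' : Fin N → ℝ → Matrix (Fin n) (Fin n) ℂ)
    (hlampos : ∀ k θ, 0 < lam k θ)
    (hlamdist : ∀ j k θ, j ≠ k → lam j θ ≠ lam k θ)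
    (hlamderiv : ∀ k θ, HasDerivAt (lam k) (lam' k θ) θ)
    (hPderiv : ∀ k i₁ i₂ θ, HasDerivAt (fun t => P k t i₁ i₂) (P' k θ i₁ i₂) θ)
    (hherm : ∀ k θ, (P k θ).IsHermitian)
    (horth : ∀ j k θ, P j θ * P k θ = if j = k then P j θ else 0)
    (hsum : ∀ θ, ∑ k, P k θ = 1)
    (ρ ρ' : ℝ → Matrix (Fin n) (Fin n) ℂ)
    (hρ : ∀ θ, ρ θ = ∑ k, (lam k θ : ℂ) • P k θ)
    (hρ' : ∀ θ, ρ' θ = ∑ k, (lam' k θ : ℂ) • P k θ + ∑ k, (lam k θ : ℂ) • P' k θ) :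
    (∀ θ, ρ θ * ρ' θ = ρ' θ * ρ θ) ↔ (∀ θ, ∑ k, (lam k θ : ℂ) • P' k θ = 0) := by
  have hprod : ∀ j k θ, P' j θ * P k θ + P j θ * P' k θ = if j = k then P' j θ else 0 := by
    intro j k θ
    ext a b
    have h1 : HasDerivAt (fun t => (P j t * P k t) a b)
        ((P' j θ * P k θ + P j θ * P' k θ) a b) θ := by
      simp only [Matrix.mul_apply, Matrix.add_apply, ← Finset.sum_add_distrib]
      exact HasDerivAt.fun_sum fun i _ => (hPderiv j a i θ).mul (hPderiv k i b θ)
    have h2 : HasDerivAt (fun t => (P j t * P k t) a b)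
        ((if j = k then P' j θ else 0 : Matrix (Fin n) (Fin n) ℂ) a b) θ := by
      simp only [horth]
      by_cases h : j = k
      · simpa only [h, if_true] using hPderiv k a b θ
      · simpa only [h, if_false, Matrix.zero_apply] using hasDerivAt_const θ (0 : ℂ)
    exact h1.unique h2
  have hdiag : ∀ i k θ, P i θ * P' k θ * P i θ = 0 := by
    intro i k θ
    have hii : P i θ * P i θ = P i θ := by simpa using horth i i θ
    by_cases h : i = k
    · subst h
      have h1 := congrArg (fun X => P i θ * X * P i θ) (hprod i i θ)
      simp only [if_true, mul_add, add_mul] at h1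
      have e1 : P i θ * (P' i θ * P i θ) * P i θ = P i θ * P' i θ * P i θ := by
        rw [mul_assoc, mul_assoc, hii, ← mul_assoc]
      have e2 : P i θ * (P i θ * P' i θ) * P i θ = P i θ * P' i θ * P i θ := by
        rw [← mul_assoc, hii]
      rw [e1, e2] at h1
      simpa using h1
    · have h1 := congrArg (fun X => X * P i θ) (hprod i k θ)
      have hki : P k θ * P i θ = 0 := by
        rw [horth, if_neg (Ne.symm h)]
      simpa only [h, if_false, add_mul, mul_assoc, hki, mul_zero, zero_mul, zero_add] using h1
  have hL : ∀ j θ, P j θ * ρ θ = (lam j θ : ℂ) • P j θ := by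
    intro j θ
    simp [hρ, Finset.mul_sum, horth]
  have hR : ∀ j θ, ρ θ * P j θ = (lam j θ : ℂ) • P j θ := by
    intro j θ
    simp [hρ, Finset.sum_mul, horth]
  have hD : ∀ θ, ρ θ * (∑ k, (lam' k θ : ℂ) • P k θ) = (∑ k, (lam' k θ : ℂ) • P k θ) * ρ θ := by
    intro θ
    simp only [Finset.mul_sum, Finset.sum_mul, Matrix.mul_smul, Matrix.smul_mul, hL, hR]
  refine forall_congr' fun θ => ?_
  rw [hρ' θ, mul_add, add_mul, hD, add_right_inj]
  constructor
  · intro hc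
    set A := ∑ k, (lam k θ : ℂ) • P' k θ with hA
    have hij : ∀ i j, P i θ * A * P j θ = 0 := by
      intro i j
      by_cases h : i = j
      · subst h
        simp only [hA, Finset.mul_sum, Finset.sum_mul, Matrix.mul_smul, Matrix.smul_mul, hdiag,
          smul_zero, Finset.sum_const_zero]
      · have h1 := congrArg (fun X => P i θ * X * P j θ) hc
        have e1 : P i θ * (ρ θ * A) * P j θ = (lam i θ : ℂ) • (P i θ * A * P j θ) := by
          rw [← mul_assoc, hL, Matrix.smul_mul, Matrix.smul_mul]
        have e2 : P i θ * (A * ρ θ) * P j θ = (lam j θ : ℂ) • (P i θ * A * P j θ) := by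
          rw [mul_assoc, mul_assoc, hR, Matrix.mul_smul, Matrix.mul_smul, mul_assoc]
        simp only [e1, e2] at h1
        rw [← sub_eq_zero, ← sub_smul, smul_eq_zero] at h1
        refine h1.resolve_left fun h2 => hlamdist i j θ h ?_
        exact_mod_cast sub_eq_zero.mp h2
    have : A = (∑ i, P i θ) * A * (∑ j, P j θ) := by rw [hsum, one_mul, mul_one]
    rw [this]
    simp only [Finset.sum_mul, Finset.mul_sum, hij, Finset.sum_const_zero]
  · intro h
    rw [h, mul_zero, zero_mul]
end

section
/- Let ρ_θ = Σ_{k=1}^N λ_k(θ)P_k(θ) where λ_k : ℝ → (0,1) are differentiable with λ_j(θ) ≠ λ_k(θ) for j ≠ k, and P₁, …, P_N : ℝ → M_n(ℂ) are differentiable families of Hermitian matrices with P_j(θ)P_k(θ) = δ_{jk}P_j(θ) and Σ_k P_k(θ) = I. Define H(θ) = Σ_k (λ_k'(θ)/λ_k(θ))P_k(θ) + Σ_k (ln λ_k(θ))P_k'(θ) and, for t ∈ [0,1], ρ_θ^t = Σ_k λ_k(θ)^t P_k(θ). Then ∫₀¹ ρ_θ^t H(θ) ρ_θ^{1−t} dt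 = ρ_θ' for every θ, where ρ_θ' = Σ_k λ_k'(θ)P_k(θ) + Σ_k λ_k(θ)P_k'(θ). -/
open Matrix

lemma kmb_int (a b : ℝ) (ha : 0 < a) (hb : 0 < b) :
    (∫ t in (0 : ℝ)..1, a ^ t * b ^ (1 - t)) * (Real.log a - Real.log b) = a - b := by
  have hd : ∀ t : ℝ, HasDerivAt (fun t : ℝ => a ^ t * b ^ (1 - t))
      (a ^ t * b ^ (1 - t) * (Real.log a - Real.log b)) t := by
    intro t
    have h1 := (hasDerivAt_id t).const_rpow ha
    have h2 := ((hasDerivAt_id t).const_sub 1).const_rpow hb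
    refine (h1.mul h2).congr_deriv ?_
    simp only [id]
    ring
  have hc : Continuous (fun t : ℝ => a ^ t * b ^ (1 - t) * (Real.log a - Real.log b)) := by
    have h : Continuous (fun t : ℝ => a ^ t * b ^ (1 - t)) :=
      continuous_iff_continuousAt.2 fun t => (hd t).continuousAt
    exact h.mul continuous_const
  rw [← intervalIntegral.integral_mul_const,
    intervalIntegral.integral_eq_sub_of_hasDerivAt (fun t _ => hd t) (hc.intervalIntegrable _ _)]
  simp

lemma kmb_int_self (a : ℝ) (ha : 0 < a) :
    (∫ t in (0 : ℝ)..1, a ^ t * a ^ (1 - t)) = a := by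
  have : ∀ t : ℝ, a ^ t * a ^ (1 - t) = a := by
    intro t
    rw [← Real.rpow_add ha]; simp
  simp [this]

lemma kmb_cont (a b : ℝ) (ha : 0 < a) (hb : 0 < b) :
    Continuous (fun t : ℝ => a ^ t * b ^ (1 - t)) :=
  (continuous_const.rpow continuous_id fun _ => Or.inl ha.ne').mul
    (continuous_const.rpow (continuous_const.sub continuous_id) fun _ => Or.inl hb.ne')

/-- algebraic core -/
lemma kmb_alg {n N : ℕ} (P P' : Fin N → Matrix (Fin n) (Fin n) ℂ)
    (horth : ∀ j k, P j * P k = if j = k then P j else 0)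
    (hd : ∀ j k, P' j * P k + P j * P' k = if j = k then P' j else 0) (a b k : Fin N) :
    P a * P' k * P b = ((if k = a then 1 else 0) - (if k = b then 1 else 0) : ℂ) •
      (P a * P' a * P b) := by
  have h1 : P a * P' k * P b = P a * P' k * (P k * P b) + (P a * P k) * P' k * P b := by
    have := hd k k
    simp only [if_true] at this
    conv_lhs => rw [← this]
    noncomm_ring
  have h2 : a ≠ b → P a * P' b * P b = - (P a * P' a * P b) := by
    intro hab
    have := hd a b
    rw [if_neg hab] at this
    have h3 : P a * (P' a * P b + P a * P' b) * P b = 0 := by rw [this]; simp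
    have h4 : P a * (P' a * P b + P a * P' b) * P b
      = P a * P' a * (P b * P b) + (P a * P a) * P' b * P b := by noncomm_ring
    rw [h4, horth, horth] at h3
    simp only [if_true] at h3
    exact eq_neg_of_add_eq_zero_right h3
  rw [horth, horth] at h1
  by_cases ha : k = a
  · subst ha
    by_cases hb : k = b
    · subst hb
      simpa using h1
    · simp [hb]
  · by_cases hb : k = b
    · subst hb
      simp [ha, h2 (Ne.symm ha)]
    · rw [h1]
      simp [ha, hb, Ne.symm ha]

lemma kmb_sandwich {n N : ℕ} (P P' : Fin N → Matrix (Fin n) (Fin n) ℂ)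
    (horth : ∀ j k, P j * P k = if j = k then P j else 0)
    (hd : ∀ j k, P' j * P k + P j * P' k = if j = k then P' j else 0) (a b : Fin N)
    (u v : Fin N → ℂ) :
    P a * (∑ k, u k • P k + ∑ k, v k • P' k) * P b =
      (if a = b then u a • P a else 0) + (v a - v b) • (P a * P' a * P b) := by
  rw [mul_add, add_mul]
  congr 1
  · simp only [Finset.mul_sum, Finset.sum_mul, mul_smul_comm, smul_mul_assoc, horth]
    rw [Finset.sum_eq_single a]
    · simp [horth]
    · intro k _ hk
      simp [Ne.symm hk]
    · simp
  · simp only [Finset.mul_sum, Finset.sum_mul, mul_smul_comm, smul_mul_assoc]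
    rw [Finset.sum_congr rfl fun k _ => by rw [kmb_alg P P' horth hd a b k, smul_smul]]
    rw [← Finset.sum_smul]
    simp [mul_sub]

lemma kmb_expand {n N : ℕ} (P : Fin N → Matrix (Fin n) (Fin n) ℂ)
    (M : Matrix (Fin n) (Fin n) ℂ) (u v : Fin N → ℂ) (i j : Fin n) :
    ((∑ k, u k • P k) * M * (∑ k, v k • P k)) i j =
      ∑ a, ∑ b, (u a * v b) * (P a * M * P b) i j := by
  simp only [Finset.mul_sum, Finset.sum_mul, mul_smul_comm, smul_mul_assoc, smul_smul]
  rw [Finset.sum_comm]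
  simp only [Matrix.sum_apply, Matrix.smul_apply, smul_eq_mul, Finset.mul_sum]
  refine Finset.sum_congr rfl fun a _ => Finset.sum_congr rfl fun b _ => ?_
  ring

/-- Kubo–Mori–Bogoliubov relation: for `ρ_θ = Σ_k λ_k(θ)P_k(θ)` (spectral decomposition with
distinct eigenvalues `λ_k(θ) ∈ (0,1)` and differentiable mutually orthogonal Hermitian
projections summing to `I`), the Boltzmann–von Neumann logarithmic derivative
`H(θ) = Σ_k (λ_k'/λ_k)P_k + Σ_k (ln λ_k)P_k'` satisfies
`∫₀¹ ρ_θ^t H(θ) ρ_θ^{1−t} dt = ρ_θ'` (entrywise), where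
`ρ_θ^t = Σ_k λ_k(θ)^t P_k(θ)` and `ρ_θ' = Σ_k λ_k'(θ)P_k(θ) + Σ_k λ_k(θ)P_k'(θ)`. -/
theorem kmb_relation {n N : ℕ}
    (lam lam' : Fin N → ℝ → ℝ)
    (P P' : Fin N → ℝ → Matrix (Fin n) (Fin n) ℂ)
    (hlam : ∀ k θ, lam k θ ∈ Set.Ioo (0 : ℝ) 1)
    (hlamdist : ∀ j k θ, j ≠ k → lam j θ ≠ lam k θ)
    (hlamderiv : ∀ k θ, HasDerivAt (lam k) (lam' k θ) θ)
    (hPderiv : ∀ k i₁ i₂ θ, HasDerivAt (fun t => P k t i₁ i₂) (P' k θ i₁ i₂) θ)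
    (hherm : ∀ k θ, (P k θ).IsHermitian)
    (horth : ∀ j k θ, P j θ * P k θ = if j = k then P j θ else 0)
    (hsum : ∀ θ, ∑ k, P k θ = 1)
    (H ρ' : ℝ → Matrix (Fin n) (Fin n) ℂ)
    (hH : ∀ θ, H θ = ∑ k, ((lam' k θ / lam k θ : ℝ) : ℂ) • P k θ +
        ∑ k, ((Real.log (lam k θ) : ℝ) : ℂ) • P' k θ)
    (hρ' : ∀ θ, ρ' θ = ∑ k, ((lam' k θ : ℝ) : ℂ) • P k θ +
        ∑ k, ((lam k θ : ℝ) : ℂ) • P' k θ) :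
    ∀ (θ : ℝ) (i j : Fin n),
      (∫ t in (0 : ℝ)..1,
        ((∑ k, ((lam k θ ^ t : ℝ) : ℂ) • P k θ) * H θ *
          (∑ k, ((lam k θ ^ (1 - t) : ℝ) : ℂ) • P k θ)) i j) = ρ' θ i j := by
  intro θ i j
  have hd : ∀ j k, P' j θ * P k θ + P j θ * P' k θ = if j = k then P' j θ else 0 := by
    intro a b
    ext i j
    have h1 : HasDerivAt (fun t => (P a t * P b t) i j)
        ((P' a θ * P b θ + P a θ * P' b θ) i j) θ := by
      simp only [Matrix.mul_apply, Matrix.add_apply, ← Finset.sum_add_distrib]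
      exact HasDerivAt.fun_sum fun k _ => (hPderiv a i k θ).mul (hPderiv b k j θ)
    have h2 : HasDerivAt (fun t => (P a t * P b t) i j)
        ((if a = b then P' a θ else 0 : Matrix (Fin n) (Fin n) ℂ) i j) θ := by
      simp only [horth]
      split_ifs with h
      · exact hPderiv a i j θ
      · exact hasDerivAt_const _ _
    exact h1.unique h2
  have ho : ∀ j k, P j θ * P k θ = if j = k then P j θ else 0 := fun j k => horth j k θ
  have hR : ρ' θ i j = ∑ a, ∑ b, (P a θ * ρ' θ * P b θ) i j := by
    have := kmb_expand (fun k => P k θ) (ρ' θ) (fun _ => 1) (fun _ => 1) i j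
    simpa [hsum] using this
  rw [hR]
  simp only [kmb_expand (fun k => P k θ)]
  have hcont : ∀ a b, Continuous (fun t : ℝ =>
      ((lam a θ ^ t : ℝ) : ℂ) * ((lam b θ ^ (1 - t) : ℝ) : ℂ) * (P a θ * H θ * P b θ) i j) := by
    intro a b
    have := Complex.continuous_ofReal.comp (kmb_cont _ _ (hlam a θ).1 (hlam b θ).1)
    simp only [← Complex.ofReal_mul]
    exact this.mul continuous_const
  rw [intervalIntegral.integral_finsetSum fun a _ =>
    (continuous_finsetSum _ fun b _ => hcont a b).intervalIntegrable _ _]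
  refine Finset.sum_congr rfl fun a _ => ?_
  rw [intervalIntegral.integral_finsetSum fun b _ => (hcont a b).intervalIntegrable _ _]
  refine Finset.sum_congr rfl fun b _ => ?_
  rw [intervalIntegral.integral_mul_const]
  simp only [← Complex.ofReal_mul]
  rw [intervalIntegral.integral_ofReal, hH, hρ',
    kmb_sandwich (fun k => P k θ) (fun k => P' k θ) ho hd,
    kmb_sandwich (fun k => P k θ) (fun k => P' k θ) ho hd]
  have e1 := kmb_int _ _ (hlam a θ).1 (hlam b θ).1
  rw [Matrix.add_apply, Matrix.add_apply, Matrix.smul_apply, Matrix.smul_apply, mul_add]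
  congr 1
  · split_ifs with h
    · subst h
      rw [kmb_int_self _ (hlam a θ).1]
      have hne := (hlam a θ).1.ne'
      rw [Matrix.smul_apply, Matrix.smul_apply, smul_eq_mul, smul_eq_mul, ← mul_assoc,
        ← Complex.ofReal_mul, mul_div_cancel₀ _ hne]
    · simp
  · rw [smul_eq_mul, smul_eq_mul, ← mul_assoc, ← Complex.ofReal_sub, ← Complex.ofReal_sub,
      ← Complex.ofReal_mul, e1]
end

section
/- Let ρ_θ = Σ_{k=1}^N λ_k(θ)P_k(θ) where λ_k : ℝ → (0,1) are differentiable with λ_j(θ) ≠ λ_k(θ) for j ≠ k, and P₁, …, P_N : ℝ → M_n(ℂ) are differentiable families of Hermitian matrices with P_j(θ)P_k(θ) = δ_{jk}P_j(θ) and Σ_k P_k(θ) = I. Then the improper integral ∫₀^∞ (ρ_θ + uI)^{−1} ρ_θ' (ρ_θ + uI)^{−1} du converges and equals Σ_k (λ_k'(θ)/λ_k(θ))P_k(θ) + Σ_k (ln λ_k(θ))P_k'(θ), where ρ_θ' = Σ_k λ_k'(θ)P_k(θ) + Σ_k λ_k(θ)P_k'(θ). -/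
open Matrix MeasureTheory

lemma bvn_alg {n N : ℕ} (P P' : Fin N → Matrix (Fin n) (Fin n) ℂ)
    (horth : ∀ j k, P j * P k = if j = k then P j else 0)
    (hsum : ∑ k, P k = 1) (hsum' : ∑ k, P' k = 0)
    (hd : ∀ j k, P' j * P k + P j * P' k = if j = k then P' j else 0)
    (l m : Fin N → ℂ) (u : ℂ) (h0 : ∀ k, l k + u ≠ 0) :
    ((∑ k, l k • P k) + u • 1)⁻¹ * (∑ k, m k • P k + ∑ k, l k • P' k) *
      ((∑ k, l k • P k) + u • 1)⁻¹ =
    ∑ k, (m k / (l k + u) ^ 2) • P k - ∑ k, (1 / (l k + u)) • P' k := by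
  have hmul : ∀ f g : Fin N → ℂ,
      (∑ k, f k • P k) * (∑ k, g k • P k) = ∑ k, (f k * g k) • P k := by
    intro f g
    rw [Finset.sum_mul_sum]
    refine Finset.sum_congr rfl fun j _ => ?_
    simp [horth, smul_smul, mul_comm]
  have hmul' : ∀ f g : Fin N → ℂ,
      (∑ k, f k • P' k) * (∑ k, g k • P k) + (∑ k, f k • P k) * (∑ k, g k • P' k)
        = ∑ k, (f k * g k) • P' k := by
    intro f g
    rw [Finset.sum_mul_sum, Finset.sum_mul_sum, ← Finset.sum_add_distrib]
    refine Finset.sum_congr rfl fun j _ => ?_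
    rw [← Finset.sum_add_distrib]
    have : ∀ k, f j • P' j * g k • P k + f j • P j * g k • P' k
        = (f j * g k) • (if j = k then P' j else 0) := by
      intro k
      rw [← hd, smul_add]
      simp [smul_smul, mul_comm]
    rw [Finset.sum_congr rfl fun k _ => this k]
    simp
  have hA : (∑ k, l k • P k) + u • (1 : Matrix (Fin n) (Fin n) ℂ) = ∑ k, (l k + u) • P k := by
    rw [← hsum, Finset.smul_sum, ← Finset.sum_add_distrib]
    simp [add_smul]
  have hA' : ∑ k, l k • P' k = ∑ k, (l k + u) • P' k := by
    simp [add_smul, Finset.sum_add_distrib, ← Finset.smul_sum, hsum']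
  have hAR : (∑ k, (l k + u) • P k) * (∑ k, (1 / (l k + u)) • P k) = 1 := by
    rw [hmul, ← hsum]
    refine Finset.sum_congr rfl fun k _ => ?_
    rw [mul_one_div_cancel (h0 k), one_smul]
  rw [hA, hA', Matrix.inv_eq_right_inv hAR]
  have key : (∑ k, (1 / (l k + u)) • P k) * (∑ k, m k • P k + ∑ k, (l k + u) • P' k)
      = (∑ k, (m k / (l k + u) ^ 2) • P k - ∑ k, (1 / (l k + u)) • P' k)
        * (∑ k, (l k + u) • P k) := by
    have h1 := hmul' (fun k => 1 / (l k + u)) (fun k => l k + u)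
    have h2 : ∑ k, (1 / (l k + u) * (l k + u)) • P' k = 0 := by
      rw [← hsum']
      refine Finset.sum_congr rfl fun k _ => ?_
      rw [one_div_mul_cancel (h0 k), one_smul]
    rw [h2] at h1
    rw [mul_add, sub_mul, hmul, hmul, eq_neg_of_add_eq_zero_right h1, sub_eq_add_neg]
    congr 1
    refine Finset.sum_congr rfl fun k _ => ?_
    congr 1
    have := h0 k
    field_simp
  rw [key, mul_assoc, hAR, mul_one]

lemma bvn_int1 (a : ℝ) (ha : 0 < a) :
    IntegrableOn (fun u : ℝ => 1 / (a + u) ^ 2) (Set.Ioi 0) ∧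
    ∫ u in Set.Ioi (0 : ℝ), 1 / (a + u) ^ 2 = 1 / a := by
  have hderiv : ∀ x ∈ Set.Ici (0 : ℝ),
      HasDerivAt (fun u : ℝ => -(a + u)⁻¹) (1 / (a + x) ^ 2) x := by
    intro x hx
    have hx' : (0 : ℝ) ≤ x := hx
    have := (((hasDerivAt_id x).const_add a).inv (by simp; positivity)).neg
    exact this.congr_deriv (by simp [neg_div])
  have hlim : Filter.Tendsto (fun u : ℝ => -(a + u)⁻¹) Filter.atTop (nhds 0) := by
    simpa using ((Filter.tendsto_atTop_add_const_left _ a Filter.tendsto_id).inv_tendsto_atTop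
      ).neg
  have hpos : ∀ x ∈ Set.Ioi (0 : ℝ), 0 ≤ 1 / (a + x) ^ 2 := fun x _ => by positivity
  refine ⟨integrableOn_Ioi_deriv_of_nonneg' hderiv hpos hlim, ?_⟩
  rw [integral_Ioi_of_hasDerivAt_of_nonneg' hderiv hpos hlim]
  simp

lemma bvn_int2 (a : ℝ) (ha : 0 < a) (ha1 : a < 1) :
    IntegrableOn (fun u : ℝ => 1 / (1 + u) - 1 / (a + u)) (Set.Ioi 0) ∧
    ∫ u in Set.Ioi (0 : ℝ), (1 / (1 + u) - 1 / (a + u)) = Real.log a := by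
  have hderiv : ∀ x ∈ Set.Ici (0 : ℝ),
      HasDerivAt (fun u : ℝ => Real.log (1 + u) - Real.log (a + u))
        (1 / (1 + x) - 1 / (a + x)) x := by
    intro x hx
    have hx' : (0 : ℝ) ≤ x := hx
    exact (((hasDerivAt_id x).const_add 1).log (by simp; positivity)).sub
      (((hasDerivAt_id x).const_add a).log (by simp; positivity))
  have hlim : Filter.Tendsto (fun u : ℝ => Real.log (1 + u) - Real.log (a + u))
      Filter.atTop (nhds 0) := by
    have h1 : Filter.Tendsto (fun u : ℝ => 1 + (1 - a) * (a + u)⁻¹) Filter.atTop (nhds 1) := by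
      simpa using ((Filter.tendsto_atTop_add_const_left _ a
        Filter.tendsto_id).inv_tendsto_atTop.const_mul (1 - a)).const_add 1
    have h2 := h1.log one_ne_zero
    rw [Real.log_one] at h2
    refine h2.congr' ?_
    filter_upwards [Filter.eventually_gt_atTop 0] with u hu
    rw [← Real.log_div (by positivity) (by positivity)]
    congr 1
    field_simp
    ring
  have hneg : ∀ x ∈ Set.Ioi (0 : ℝ), 1 / (1 + x) - 1 / (a + x) ≤ 0 := by
    intro x hx
    have hx' : (0 : ℝ) < x := hx
    rw [sub_nonpos]
    apply one_div_le_one_div_of_le <;> linarith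
  refine ⟨integrableOn_Ioi_deriv_of_nonpos' hderiv hneg hlim, ?_⟩
  rw [integral_Ioi_of_hasDerivAt_of_nonpos' hderiv hneg hlim]
  simp

/-- For `ρ_θ = Σ_k λ_k(θ)P_k(θ)` (spectral decomposition with distinct eigenvalues
`λ_k(θ) ∈ (0,1)` and differentiable mutually orthogonal Hermitian projections summing to `I`),
the improper integral `∫₀^∞ (ρ_θ + u)^{−1} ρ_θ' (ρ_θ + u)^{−1} du` converges (entrywise) and
equals the Boltzmann–von Neumann logarithmic derivative
`Σ_k (λ_k'(θ)/λ_k(θ))P_k(θ) + Σ_k (ln λ_k(θ))P_k'(θ)`, where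
`ρ_θ' = Σ_k λ_k'(θ)P_k(θ) + Σ_k λ_k(θ)P_k'(θ)`. -/
theorem bvn_integral_representation {n N : ℕ}
    (lam lam' : Fin N → ℝ → ℝ)
    (P P' : Fin N → ℝ → Matrix (Fin n) (Fin n) ℂ)
    (hlam : ∀ k θ, lam k θ ∈ Set.Ioo (0 : ℝ) 1)
    (hlamdist : ∀ j k θ, j ≠ k → lam j θ ≠ lam k θ)
    (hlamderiv : ∀ k θ, HasDerivAt (lam k) (lam' k θ) θ)
    (hPderiv : ∀ k i₁ i₂ θ, HasDerivAt (fun t => P k t i₁ i₂) (P' k θ i₁ i₂) θ)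
    (hherm : ∀ k θ, (P k θ).IsHermitian)
    (horth : ∀ j k θ, P j θ * P k θ = if j = k then P j θ else 0)
    (hsum : ∀ θ, ∑ k, P k θ = 1)
    (ρ ρ' : ℝ → Matrix (Fin n) (Fin n) ℂ)
    (hρ : ∀ θ, ρ θ = ∑ k, ((lam k θ : ℝ) : ℂ) • P k θ)
    (hρ' : ∀ θ, ρ' θ = ∑ k, ((lam' k θ : ℝ) : ℂ) • P k θ +
        ∑ k, ((lam k θ : ℝ) : ℂ) • P' k θ) :
    ∀ (θ : ℝ) (i j : Fin n),
      IntegrableOn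
        (fun u : ℝ => ((ρ θ + (u : ℂ) • 1)⁻¹ * ρ' θ * (ρ θ + (u : ℂ) • 1)⁻¹) i j)
        (Set.Ioi 0) ∧
      (∫ u in Set.Ioi (0 : ℝ),
          ((ρ θ + (u : ℂ) • 1)⁻¹ * ρ' θ * (ρ θ + (u : ℂ) • 1)⁻¹) i j) =
        (∑ k, ((lam' k θ / lam k θ : ℝ) : ℂ) • P k θ +
          ∑ k, ((Real.log (lam k θ) : ℝ) : ℂ) • P' k θ) i j := by
  intro θ i j
  have hsum' : ∑ k, P' k θ = 0 := by
    ext a b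
    have h1 := HasDerivAt.fun_sum (u := Finset.univ) fun k _ => hPderiv k a b θ
    have h2 : (fun t => ∑ k, P k t a b) = fun _ => (1 : Matrix (Fin n) (Fin n) ℂ) a b := by
      funext t
      rw [← hsum t, Matrix.sum_apply]
    rw [h2] at h1
    rw [Matrix.sum_apply]
    exact h1.unique (hasDerivAt_const _ _)
  have hd : ∀ p q, P' p θ * P q θ + P p θ * P' q θ = if p = q then P' p θ else 0 := by
    intro p q
    ext a b
    have h1 := HasDerivAt.fun_sum (u := Finset.univ)
      fun c _ => (hPderiv p a c θ).mul (hPderiv q c b θ)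
    have h2 : (fun t => ∑ c, P p t a c * P q t c b) =
        fun t => (if p = q then P p t else 0) a b := by
      funext t
      rw [← horth p q t, Matrix.mul_apply]
    have h3 : HasDerivAt (fun t => (if p = q then P p t else 0) a b)
        ((if p = q then P' p θ else 0) a b) θ := by
      split_ifs
      · exact hPderiv p a b θ
      · exact hasDerivAt_const _ _
    rw [← h2] at h3
    refine Eq.trans ?_ (h3.unique h1).symm
    rw [Matrix.add_apply, Matrix.mul_apply, Matrix.mul_apply, Finset.sum_add_distrib]
  have hF : ∀ u ∈ Set.Ioi (0 : ℝ),
      ((ρ θ + (u : ℂ) • 1)⁻¹ * ρ' θ * (ρ θ + (u : ℂ) • 1)⁻¹) i j =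
      ∑ k, (((1 / (lam k θ + u) ^ 2 : ℝ) : ℂ) * (lam' k θ * P k θ i j) +
        ((1 / (1 + u) - 1 / (lam k θ + u) : ℝ) : ℂ) * P' k θ i j) := by
    intro u hu
    have hu' : (0 : ℝ) < u := hu
    have h0 : ∀ k, ((lam k θ : ℝ) : ℂ) + (u : ℂ) ≠ 0 := by
      intro k
      have := (hlam k θ).1
      have h : lam k θ + u ≠ 0 := by positivity
      exact_mod_cast h
    rw [hρ, hρ', bvn_alg (fun k => P k θ) (fun k => P' k θ) (fun p q => horth p q θ) (hsum θ)
      hsum' hd (fun k => (lam k θ : ℂ)) (fun k => (lam' k θ : ℂ)) u h0]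
    have hs : ∑ k, P' k θ i j = 0 := by
      rw [← Matrix.sum_apply, hsum']; rfl
    rw [Finset.sum_add_distrib]
    simp only [Complex.ofReal_sub, sub_mul, Finset.sum_sub_distrib, ← Finset.mul_sum, hs,
      Matrix.sub_apply, Matrix.sum_apply, Matrix.smul_apply, smul_eq_mul]
    push_cast
    rw [mul_zero, zero_sub, sub_eq_add_neg]
    congr 1
    refine Finset.sum_congr rfl fun k _ => ?_
    ring
  have hi1 : ∀ k, IntegrableOn (fun u : ℝ =>
      ((1 / (lam k θ + u) ^ 2 : ℝ) : ℂ) * (lam' k θ * P k θ i j)) (Set.Ioi 0) := fun k =>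
    (bvn_int1 _ (hlam k θ).1).1.ofReal.mul_const _
  have hi2 : ∀ k, IntegrableOn (fun u : ℝ =>
      ((1 / (1 + u) - 1 / (lam k θ + u) : ℝ) : ℂ) * P' k θ i j) (Set.Ioi 0) := fun k =>
    (bvn_int2 _ (hlam k θ).1 (hlam k θ).2).1.ofReal.mul_const _
  constructor
  · refine IntegrableOn.congr_fun ?_ (fun u hu => (hF u hu).symm) measurableSet_Ioi
    exact integrable_finsetSum _ fun k _ => (hi1 k).add (hi2 k)
  · rw [setIntegral_congr_fun measurableSet_Ioi hF]
    refine (integral_finsetSum _ fun k _ => (hi1 k).add (hi2 k)).trans ?_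
    simp only [Pi.add_apply]
    simp only [Matrix.add_apply, Matrix.sum_apply, Matrix.smul_apply, smul_eq_mul]
    rw [← Finset.sum_add_distrib]
    refine Finset.sum_congr rfl fun k _ => ?_
    rw [integral_add (hi1 k) (hi2 k), integral_mul_const, integral_mul_const,
      integral_complex_ofReal, integral_complex_ofReal,
      (bvn_int1 _ (hlam k θ).1).2, (bvn_int2 _ (hlam k θ).1 (hlam k θ).2).2]
    push_cast
    ring
end

section
/- Let H be a complex Hilbert space with orthonormal basis (e_k)_{k∈ℕ}, let (λ_k)_{k∈ℕ} be reals with 0 < λ_k < 1, let (a_k)_{k∈ℕ} be reals with C₁ := sup_k |a_k| < ∞, and let (v_k)_{k∈ℕ} be vectors in H orthogonal in the sense used below with C₂² := Σ_k (ln λ_k)²‖v_k‖² < ∞. Then for every f ∈ H the series T f := Σ_k a_k ⟨e_k, f⟩ e_k + Σ_k (ln λ_k)(⟨e_k, f⟩ v_k + ⟨v_k, f⟩ e_k) converges in H, and ‖T f‖ ≤ (C₁ + 2C₂)‖f‖; in particular T is a bounded linear operator with ‖T‖ ≤ sup_k |a_k| + 2(Σ_k (ln λ_k)² ‖v_k‖²)^{1/2}.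 -/
open scoped InnerProductSpace

theorem le_of_sq_le_sq_aux {a b : ℝ} (h : a ^ 2 ≤ b ^ 2) (hb : 0 ≤ b) : a ≤ b :=
  (le_abs_self a).trans (abs_le_of_sq_le_sq h hb)

theorem aux_orth {H : Type*} [NormedAddCommGroup H]
    [InnerProductSpace ℂ H] [CompleteSpace H]
    (e : ℕ → H) (honb : Orthonormal ℂ e) (c : ℕ → ℂ) (B : ℝ) (hB : 0 ≤ B)
    (h : ∀ s : Finset ℕ, ∑ k ∈ s, ‖c k‖ ^ 2 ≤ B ^ 2) :
    Summable (fun k => c k • e k) ∧ ‖∑' k, c k • e k‖ ≤ B := by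
  have hs : Summable (fun k => ‖c k‖ ^ 2) :=
    summable_of_sum_le (fun k => by positivity) h
  have h1 : Summable (fun k => c k • e k) := by
    have := (honb.orthogonalFamily.summable_iff_norm_sq_summable c).2 hs
    simpa using this
  refine ⟨h1, ?_⟩
  refine le_of_tendsto h1.hasSum.norm (Filter.Eventually.of_forall fun s => ?_)
  have h2 := honb.orthogonalFamily.norm_sum c s
  simp only [LinearIsometry.toSpanSingleton_apply] at h2
  exact le_of_sq_le_sq_aux (h2.trans_le (h s)) hB

theorem aux_abs {H : Type*} [NormedAddCommGroup H] [CompleteSpace H]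
    (g : ℕ → H) (x y : ℕ → ℝ) (X Y : ℝ) (hX : 0 ≤ X) (hY : 0 ≤ Y)
    (hg : ∀ k, ‖g k‖ ≤ x k * y k)
    (hx : ∀ s : Finset ℕ, ∑ k ∈ s, x k ^ 2 ≤ X ^ 2)
    (hy : ∀ s : Finset ℕ, ∑ k ∈ s, y k ^ 2 ≤ Y ^ 2) :
    Summable g ∧ ‖∑' k, g k‖ ≤ X * Y := by
  have h : ∀ s : Finset ℕ, ∑ k ∈ s, ‖g k‖ ≤ X * Y := fun s => by
    refine (Finset.sum_le_sum fun k _ => hg k).trans ?_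
    refine le_of_sq_le_sq_aux ((Finset.sum_mul_sq_le_sq_mul_sq s x y).trans ?_) (by positivity)
    rw [mul_pow]
    exact mul_le_mul (hx s) (hy s) (Finset.sum_nonneg fun k _ => sq_nonneg _) (sq_nonneg _)
  have hs : Summable (fun k => ‖g k‖) := summable_of_sum_le (fun k => norm_nonneg _) h
  exact ⟨hs.of_norm, (norm_tsum_le_tsum_norm hs).trans (hs.tsum_le_of_sum_le h)⟩

/-- Boundedness of the Boltzmann–von Neumann logarithmic derivative: let `(e_k)` be an
orthonormal basis of a complex Hilbert space `H`, `(λ_k)` reals in `(0,1)`, `(a_k)` reals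
with `|a_k| ≤ C₁`, and `(v_k)` vectors with `Σ_k (ln λ_k)²‖v_k‖² = C₂²`.  Then for every
`f ∈ H` the series `T f = Σ_k a_k⟨e_k,f⟩e_k + Σ_k (ln λ_k)(⟨e_k,f⟩v_k + ⟨v_k,f⟩e_k)`
converges in `H` and `‖T f‖ ≤ (C₁ + 2C₂)‖f‖`. -/
theorem bvn_ld_bounded {H : Type*} [NormedAddCommGroup H]
    [InnerProductSpace ℂ H] [CompleteSpace H]
    (e : ℕ → H) (honb : Orthonormal ℂ e)
    (hdense : (Submodule.span ℂ (Set.range e)).topologicalClosure = ⊤)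
    (lam : ℕ → ℝ) (hlam : ∀ k, lam k ∈ Set.Ioo (0 : ℝ) 1)
    (a : ℕ → ℝ) (C₁ : ℝ) (hC₁ : ∀ k, |a k| ≤ C₁)
    (v : ℕ → H) (C₂ : ℝ) (hC₂ : 0 ≤ C₂)
    (hC₂sum : HasSum (fun k => (Real.log (lam k)) ^ 2 * ‖v k‖ ^ 2) (C₂ ^ 2)) :
    ∀ f : H,
      Summable (fun k =>
        ((a k : ℂ) * ⟪e k, f⟫_ℂ) • e k +
          ((Real.log (lam k) : ℂ)) • ((⟪e k, f⟫_ℂ) • v k + (⟪v k, f⟫_ℂ) • e k)) ∧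
      ‖∑' k, (((a k : ℂ) * ⟪e k, f⟫_ℂ) • e k +
          ((Real.log (lam k) : ℂ)) • ((⟪e k, f⟫_ℂ) • v k + (⟪v k, f⟫_ℂ) • e k))‖ ≤
        (C₁ + 2 * C₂) * ‖f‖ := by
  intro f
  have hC₁0 : 0 ≤ C₁ := (abs_nonneg _).trans (hC₁ 0)
  have hv : ∀ s : Finset ℕ, ∑ k ∈ s, (|Real.log (lam k)| * ‖v k‖) ^ 2 ≤ C₂ ^ 2 := fun s => by
    simp only [mul_pow, sq_abs]
    exact sum_le_hasSum s (fun k _ => by positivity) hC₂sum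
  have hf : ∀ s : Finset ℕ, ∑ k ∈ s, ‖⟪e k, f⟫_ℂ‖ ^ 2 ≤ ‖f‖ ^ 2 := fun s =>
    honb.sum_inner_products_le f
  obtain ⟨s1, n1⟩ := aux_orth e honb (fun k => (a k : ℂ) * ⟪e k, f⟫_ℂ) (C₁ * ‖f‖)
    (by positivity) (fun s => by
      rw [mul_pow]
      refine le_trans ?_ (mul_le_mul_of_nonneg_left (hf s) (sq_nonneg C₁))
      rw [Finset.mul_sum]
      refine Finset.sum_le_sum fun k _ => ?_
      rw [norm_mul, mul_pow, Complex.norm_real, Real.norm_eq_abs]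
      gcongr
      exact hC₁ k)
  obtain ⟨s2, n2⟩ := aux_abs (fun k => (Real.log (lam k) : ℂ) • (⟪e k, f⟫_ℂ) • v k)
    (fun k => |Real.log (lam k)| * ‖v k‖) (fun k => ‖⟪e k, f⟫_ℂ‖) C₂ ‖f‖ hC₂ (norm_nonneg _)
    (fun k => by
      rw [norm_smul, norm_smul, Complex.norm_real, Real.norm_eq_abs]
      exact le_of_eq (by ring)) hv hf
  obtain ⟨s3, n3⟩ := aux_orth e honb (fun k => (Real.log (lam k) : ℂ) * ⟪v k, f⟫_ℂ) (C₂ * ‖f‖)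
    (by positivity) (fun s => by
      rw [mul_pow]
      refine le_trans ?_ (mul_le_mul_of_nonneg_right (hv s) (sq_nonneg ‖f‖))
      rw [Finset.sum_mul]
      refine Finset.sum_le_sum fun k _ => ?_
      rw [norm_mul, Complex.norm_real, Real.norm_eq_abs, ← mul_pow, mul_assoc]
      gcongr
      exact norm_inner_le_norm _ _)
  have hsum := s1.hasSum.add (s2.hasSum.add s3.hasSum)
  simp only [mul_smul (Real.log _ : ℂ), ← smul_add] at hsum
  refine ⟨hsum.summable, ?_⟩
  rw [hsum.tsum_eq]
  simp only [mul_smul (Real.log _ : ℂ)] at n3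
  refine (norm_add_le _ _).trans ?_
  refine (add_le_add n1 ((norm_add_le _ _).trans (add_le_add n2 n3))).trans (le_of_eq ?_)
  ring
end

section
/- Quantum Cramér–Rao bound for the LD₂ model: let ρ ∈ M_n(ℂ) be a positive definite Hermitian matrix with Tr ρ = 1, let ρ' be a Hermitian matrix with Tr ρ' = 0, let Θ be a Hermitian matrix and θ ∈ ℝ a real number such that Tr(ρ'(Θ − θI)) = 1. Then Tr(ρ(Θ − θI)²) · Tr(ρ'ρ^{−1}ρ') ≥ 1; equivalently Var_θ(Θ) = Tr(ρ(Θ − θI)²) ≥ 1/Tr(ρ Ĥ²) where Ĥ = ρ^{−1/2}ρ'ρ^{−1/2} and Tr(ρĤ²) = Tr(ρ'ρ^{−1}ρ'). -/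
open Matrix
open scoped ComplexOrder MatrixOrder

/-- Quantum Cramér–Rao bound for the LD₂ model: if `ρ` is a positive definite state
(`Tr ρ = 1`), `ρ'` is Hermitian with `Tr ρ' = 0`, `Θ` is Hermitian, `θ ∈ ℝ`, and
`Tr(ρ'(Θ − θI)) = 1`, then `Tr(ρ(Θ − θI)²)·Tr(ρ'ρ⁻¹ρ') ≥ 1`; here
`Tr(ρ'ρ⁻¹ρ') = Tr(ρĤ²)` is the quantum Fisher information for the logarithmic
derivative `Ĥ = ρ^{−1/2}ρ'ρ^{−1/2}`. -/
theorem cramer_rao_ld2 {n : ℕ} (ρ ρ' Θ : Matrix (Fin n) (Fin n) ℂ) (θ : ℝ)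
    (hρ : ρ.PosDef) (htrρ : ρ.trace = 1)
    (hρ' : ρ'.IsHermitian) (htrρ' : ρ'.trace = 0)
    (hΘ : Θ.IsHermitian)
    (hunbiased : (ρ' * (Θ - (θ : ℂ) • 1)).trace = 1) :
    1 ≤ ((ρ * (Θ - (θ : ℂ) • 1) ^ 2).trace).re * ((ρ' * ρ⁻¹ * ρ').trace).re ∧
    (ρ' * ρ⁻¹ * ρ').trace =
      (ρ * ((CFC.sqrt ρ)⁻¹ * ρ' * (CFC.sqrt ρ)⁻¹) ^ 2).trace := by
  have hu : IsUnit ρ.det := (Matrix.isUnit_iff_isUnit_det ρ).mp hρ.isUnit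
  constructor
  · have hA : (Θ - (θ : ℂ) • 1 : Matrix (Fin n) (Fin n) ℂ).IsHermitian := by
      unfold Matrix.IsHermitian
      rw [Matrix.conjTranspose_sub, Matrix.conjTranspose_smul, hΘ.eq]
      simp
    generalize (Θ - (θ : ℂ) • 1 : Matrix (Fin n) (Fin n) ℂ) = A at *
    have key : ∀ t : ℝ, 0 ≤ ((ρ' * ρ⁻¹ * ρ').trace).re * (t * t) + (-2) * t
        + ((ρ * A ^ 2).trace).re := by
      intro t
      have h := (hρ.posSemidef.conjTranspose_mul_mul_same (A - (t : ℂ) • (ρ⁻¹ * ρ'))).trace_nonneg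
      have hH : (A - (t : ℂ) • (ρ⁻¹ * ρ'))ᴴ = A - (t : ℂ) • (ρ' * ρ⁻¹) := by
        rw [Matrix.conjTranspose_sub, Matrix.conjTranspose_smul, Matrix.conjTranspose_mul,
          Matrix.conjTranspose_nonsing_inv, hA.eq, hρ'.eq, hρ.isHermitian.eq]
        simp
      have e : (A - (t : ℂ) • (ρ' * ρ⁻¹)) * ρ * (A - (t : ℂ) • (ρ⁻¹ * ρ'))
          = A * ρ * A - (t : ℂ) • (A * ρ') - (t : ℂ) • (ρ' * A)
            + ((t : ℂ) * t) • (ρ' * ρ⁻¹ * ρ') := by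
        have h1 : A * ρ * (ρ⁻¹ * ρ') = A * ρ' := by
          rw [Matrix.mul_assoc, Matrix.mul_nonsing_inv_cancel_left _ _ hu]
        have h2 : ρ' * ρ⁻¹ * ρ = ρ' := Matrix.nonsing_inv_mul_cancel_right _ _ hu
        rw [Matrix.sub_mul, Matrix.smul_mul, h2, Matrix.sub_mul, Matrix.mul_sub, Matrix.mul_sub,
          Matrix.mul_smul, h1, Matrix.smul_mul, Matrix.smul_mul, Matrix.mul_smul, smul_smul,
          Matrix.mul_assoc ρ' ρ⁻¹ ρ']
        abel
      have h3 : (A * ρ * A).trace = (ρ * A ^ 2).trace := by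
        rw [Matrix.mul_assoc, Matrix.trace_mul_comm, pow_two, Matrix.mul_assoc]
      rw [hH, e, Matrix.trace_add, Matrix.trace_sub, Matrix.trace_sub, Matrix.trace_smul,
        Matrix.trace_smul, Matrix.trace_smul, Matrix.trace_mul_comm A ρ', hunbiased, h3] at h
      have h4 := (Complex.le_def.mp h).1
      simp at h4
      linarith
    have := discrim_le_zero key
    unfold discrim at this
    linarith
  · have hS : CFC.sqrt ρ * CFC.sqrt ρ = ρ :=
      CFC.sqrt_mul_sqrt_self ρ hρ.posSemidef.nonneg
    generalize CFC.sqrt ρ = S at *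
    have hSu : IsUnit S.det := by
      rw [← hS, Matrix.det_mul] at hu
      exact isUnit_of_mul_isUnit_left hu
    subst hS
    rw [Matrix.mul_inv_rev, pow_two]
    have : S * S * (S⁻¹ * ρ' * S⁻¹ * (S⁻¹ * ρ' * S⁻¹))
        = S * (ρ' * (S⁻¹ * S⁻¹) * ρ' * S⁻¹) := by
      simp only [Matrix.mul_assoc, Matrix.mul_nonsing_inv_cancel_left _ _ hSu]
    rw [this, Matrix.trace_mul_comm S, Matrix.nonsing_inv_mul_cancel_right _ _ hSu]
end

section
/- Quantum Cramér–Rao bound for the symmetric logarithmic derivative (SLD): let ρ ∈ M_n(ℂ) be a positive definite Hermitian matrix with Tr ρ = 1, let ρ' be a Hermitian matrix with Tr ρ' = 0, let Θ be a Hermitian matrix and θ ∈ ℝ with Tr(ρ'(Θ − θI)) = 1, and let H be the Hermitian matrix satisfying (1/2)(Hρ + ρH) = ρ'. Then Tr(ρ(Θ − θI)²) · Tr(ρH²) ≥ 1; equivalently Var_θ(Θ) = Tr(ρ(Θ − θI)²) ≥ 1/Tr(ρH²). -/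
open Matrix
open scoped ComplexOrder

/-- Quantum Cramér–Rao bound for the symmetric logarithmic derivative (SLD): if `ρ` is a
positive definite state (`Tr ρ = 1`), `ρ'` is Hermitian with `Tr ρ' = 0`, `Θ` is Hermitian,
`θ ∈ ℝ`, `Tr(ρ'(Θ − θI)) = 1`, and `H` is the Hermitian matrix with
`(1/2)(Hρ + ρH) = ρ'`, then `Tr(ρ(Θ − θI)²)·Tr(ρH²) ≥ 1`. -/
theorem cramer_rao_sld {n : ℕ} (ρ ρ' Θ H : Matrix (Fin n) (Fin n) ℂ) (θ : ℝ)
    (hρ : ρ.PosDef) (htrρ : ρ.trace = 1)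
    (hρ' : ρ'.IsHermitian) (htrρ' : ρ'.trace = 0)
    (hΘ : Θ.IsHermitian)
    (hunbiased : (ρ' * (Θ - (θ : ℂ) • 1)).trace = 1)
    (hH : H.IsHermitian)
    (hsld : (1 / 2 : ℂ) • (H * ρ + ρ * H) = ρ') :
    1 ≤ ((ρ * (Θ - (θ : ℂ) • 1) ^ 2).trace).re * ((ρ * H ^ 2).trace).re := by
  have hA : (Θ - (θ : ℂ) • (1 : Matrix (Fin n) (Fin n) ℂ)).IsHermitian := by
    refine hΘ.sub ?_
    simp [Matrix.IsHermitian, conjTranspose_smul]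
  generalize Θ - (θ : ℂ) • (1 : Matrix (Fin n) (Fin n) ℂ) = A at hA hunbiased ⊢
  have key : ∀ t : ℝ, 0 ≤ ((ρ * H ^ 2).trace).re * (t * t) + (-2) * t
      + ((ρ * A ^ 2).trace).re := by
    intro t
    have hB : (A - (t : ℂ) • H).IsHermitian := by
      refine hA.sub ?_
      simp [Matrix.IsHermitian, conjTranspose_smul, hH.eq]
    have h0 := (hρ.posSemidef.mul_mul_conjTranspose_same (A - (t : ℂ) • H)).trace_nonneg
    rw [hB.eq] at h0
    have h1 : ((A - (t : ℂ) • H) * ρ * (A - (t : ℂ) • H)).trace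
        = (ρ * H ^ 2).trace * ((t : ℂ) * t) + (-2) * t + (ρ * A ^ 2).trace := by
      rw [← hsld] at hunbiased
      simp only [smul_mul, trace_smul, add_mul, trace_add, smul_eq_mul] at hunbiased
      have e1 : (A * ρ * A).trace = (ρ * A ^ 2).trace := by
        rw [Matrix.mul_assoc, trace_mul_comm, pow_two, Matrix.mul_assoc]
      have e2 : (H * ρ * H).trace = (ρ * H ^ 2).trace := by
        rw [Matrix.mul_assoc, trace_mul_comm, pow_two, Matrix.mul_assoc]
      have e3 : (A * ρ * H).trace = (ρ * H * A).trace := by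
        rw [Matrix.mul_assoc, trace_mul_comm]
      simp only [sub_mul, mul_sub, smul_mul, Matrix.mul_smul, trace_sub, trace_smul, smul_eq_mul,
        e1, e2, e3]
      linear_combination (-2 * (t : ℂ)) * hunbiased
    rw [h1] at h0
    have h2 := (Complex.le_def.1 h0).1
    simpa using h2
  have := discrim_le_zero key
  unfold discrim at this
  nlinarith
end

section
/- Quantum Cramér–Rao bound for the Boltzmann–von Neumann model with modified variance: let ρ ∈ M_n(ℂ) be positive definite Hermitian with Tr ρ = 1, let Θ be a Hermitian matrix, θ ∈ ℝ, and let H be a Hermitian matrix such that the matrix ρ' := ∫₀¹ ρ^t H ρ^{1−t} dt satisfies Tr(ρ'(Θ − θI)) = 1. Then (∫₀¹ ‖ρ^{(1−t)/2} H ρ^{t/2}‖₂² dt) · (∫₀¹ ‖ρ^{(1−t)/2}(Θ − θI)ρ^{t/2}‖₂² dt) ≥ 1; i.e., the modified variance V̆_ρ(Θ) = ∫₀¹ ‖ρ^{(1−t)/2}(Θ − θI)ρ^{t/2}‖₂² dt satisfies V̆_ρ(Θ) ≥ 1/İ where İ = ∫₀¹ ‖ρ^{(1−t)/2} H ρ^{t/2}‖₂²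 dt is the modified quantum Fisher information. -/
open Matrix
open scoped ComplexOrder

/-- The `s`-th power `ρ^s` of a positive definite matrix `ρ`, defined spectrally. -/
noncomputable def mpow {n : ℕ} {ρ : Matrix (Fin n) (Fin n) ℂ} (hρ : ρ.PosDef)
    (s : ℝ) : Matrix (Fin n) (Fin n) ℂ :=
  hρ.1.cfc fun x : ℝ => x ^ s

/-- The squared Hilbert–Schmidt (Frobenius) norm `‖A‖₂² = Tr(A*A)`. -/
noncomputable def hsNormSq {n : ℕ} (A : Matrix (Fin n) (Fin n) ℂ) : ℝ :=
  ((Aᴴ * A).trace).re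

theorem mpow_eq {n : ℕ} {ρ : Matrix (Fin n) (Fin n) ℂ} (hρ : ρ.PosDef) (s : ℝ) :
    mpow hρ s = (hρ.1.eigenvectorUnitary : Matrix (Fin n) (Fin n) ℂ) *
      diagonal (fun i => ((hρ.1.eigenvalues i ^ s : ℝ) : ℂ)) *
      (hρ.1.eigenvectorUnitary : Matrix (Fin n) (Fin n) ℂ)ᴴ := by
  rfl

theorem mpow_herm {n : ℕ} {ρ : Matrix (Fin n) (Fin n) ℂ} (hρ : ρ.PosDef) (s : ℝ) :
    (mpow hρ s)ᴴ = mpow hρ s := by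
  rw [mpow_eq]
  simp only [conjTranspose_mul, conjTranspose_conjTranspose, diagonal_conjTranspose, mul_assoc]
  congr 3
  ext i
  simp

theorem mpow_mul {n : ℕ} {ρ : Matrix (Fin n) (Fin n) ℂ} (hρ : ρ.PosDef) (s t : ℝ) :
    mpow hρ s * mpow hρ t = mpow hρ (s + t) := by
  have hU : (hρ.1.eigenvectorUnitary : Matrix (Fin n) (Fin n) ℂ)ᴴ *
      (hρ.1.eigenvectorUnitary : Matrix (Fin n) (Fin n) ℂ) = 1 :=
    Unitary.coe_star_mul_self _
  rw [mpow_eq, mpow_eq, mpow_eq]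
  generalize (hρ.1.eigenvectorUnitary : Matrix (Fin n) (Fin n) ℂ) = U at *
  have : ∀ D E : Matrix (Fin n) (Fin n) ℂ, U * D * Uᴴ * (U * E * Uᴴ) = U * (D * E) * Uᴴ := by
    intro D E
    calc U * D * Uᴴ * (U * E * Uᴴ) = U * D * (Uᴴ * U) * E * Uᴴ := by simp only [mul_assoc]
      _ = _ := by rw [hU]; simp only [mul_assoc, mul_one]
  rw [this, diagonal_mul_diagonal]
  congr 3
  ext i
  rw [Real.rpow_add (hρ.eigenvalues_pos i)]
  push_cast
  rfl

theorem mpow_cont {n : ℕ} {ρ : Matrix (Fin n) (Fin n) ℂ} (hρ : ρ.PosDef) :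
    Continuous (fun s => mpow hρ s) := by
  simp only [mpow_eq]
  have : Continuous fun s : ℝ => (fun i => ((hρ.1.eigenvalues i ^ s : ℝ) : ℂ)) := by
    refine continuous_pi fun i => Complex.continuous_ofReal.comp ?_
    exact Real.continuous_const_rpow (hρ.eigenvalues_pos i).ne'
  exact (continuous_const.matrix_mul this.matrix_diagonal).matrix_mul continuous_const

theorem hsNormSq_nonneg {n : ℕ} (A : Matrix (Fin n) (Fin n) ℂ) : 0 ≤ hsNormSq A := by
  have := (posSemidef_conjTranspose_mul_self A).trace_nonneg
  exact (Complex.le_def.1 this).1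

theorem hsNormSq_sub {n : ℕ} (A B : Matrix (Fin n) (Fin n) ℂ) (x : ℝ) :
    hsNormSq (A - (x : ℂ) • B) =
      hsNormSq B * (x * x) + (-2 * ((Aᴴ * B).trace).re) * x + hsNormSq A := by
  have h : ((Bᴴ * A).trace).re = ((Aᴴ * B).trace).re := by
    have : (Bᴴ * A) = (Aᴴ * B)ᴴ := by simp
    rw [this, trace_conjTranspose]; simp
  unfold hsNormSq
  simp only [conjTranspose_sub, conjTranspose_smul, sub_mul, mul_sub, trace_sub, smul_mul,
    trace_smul, Complex.sub_re, smul_eq_mul, Complex.star_def, Complex.conj_ofReal,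
    Complex.re_ofReal_mul, h, Matrix.smul_mul, Matrix.mul_smul]
  ring

/-- Quantum Cramér–Rao bound for the Boltzmann–von Neumann model with modified variance:
if `ρ` is a positive definite state, `H` Hermitian, `Θ` Hermitian, and the matrix
`ρ' = ∫₀¹ ρ^t H ρ^{1−t} dt` satisfies `Tr(ρ'(Θ − θI)) = 1`, then
`(∫₀¹ ‖ρ^{(1−t)/2} H ρ^{t/2}‖₂² dt)·(∫₀¹ ‖ρ^{(1−t)/2}(Θ − θI)ρ^{t/2}‖₂² dt) ≥ 1`,
i.e. the modified variance `V̆_ρ(Θ)` is at least the reciprocal of the modified quantum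
Fisher information `İ`. -/
theorem cramer_rao_bvn_modified {n : ℕ}
    (ρ H Θ : Matrix (Fin n) (Fin n) ℂ) (θ : ℝ)
    (hρ : ρ.PosDef) (htrρ : ρ.trace = 1)
    (hH : H.IsHermitian) (hΘ : Θ.IsHermitian)
    (hunbiased :
      ((Matrix.of fun i j =>
          ∫ t in (0 : ℝ)..1, (mpow hρ t * H * mpow hρ (1 - t)) i j) *
        (Θ - (θ : ℂ) • 1)).trace = 1) :
    1 ≤ (∫ t in (0 : ℝ)..1, hsNormSq (mpow hρ ((1 - t) / 2) * H * mpow hρ (t / 2))) *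
        (∫ t in (0 : ℝ)..1,
          hsNormSq (mpow hρ ((1 - t) / 2) * (Θ - (θ : ℂ) • 1) * mpow hρ (t / 2))) := by
  set X : Matrix (Fin n) (Fin n) ℂ := Θ - (θ : ℂ) • 1 with hX
  have hc := mpow_cont hρ
  have c1 : Continuous fun t : ℝ => mpow hρ ((1 - t) / 2) := hc.comp (by fun_prop)
  have c2 : Continuous fun t : ℝ => mpow hρ (t / 2) := hc.comp (by fun_prop)
  have c3 : Continuous fun t : ℝ => mpow hρ (1 - t) := hc.comp (by fun_prop)
  have cA : ∀ Y : Matrix (Fin n) (Fin n) ℂ,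
      Continuous fun t : ℝ => mpow hρ ((1 - t) / 2) * Y * mpow hρ (t / 2) := fun Y =>
    (c1.matrix_mul continuous_const).matrix_mul c2
  have cN : ∀ Y : Matrix (Fin n) (Fin n) ℂ,
      Continuous fun t : ℝ => hsNormSq (mpow hρ ((1 - t) / 2) * Y * mpow hρ (t / 2)) := fun Y =>
    Complex.continuous_re.comp (((cA Y).matrix_conjTranspose.matrix_mul (cA Y)).matrix_trace)
  have cG : Continuous fun t : ℝ => mpow hρ t * H * mpow hρ (1 - t) :=
    (hc.matrix_mul continuous_const).matrix_mul c3
  have cT : Continuous fun t : ℝ => (mpow hρ t * H * mpow hρ (1 - t) * X).trace :=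
    (cG.matrix_mul continuous_const).matrix_trace
  have hint : ∫ t in (0 : ℝ)..1, (mpow hρ t * H * mpow hρ (1 - t) * X).trace = 1 := by
    rw [← hunbiased]
    generalize hg : (fun t : ℝ => mpow hρ t * H * mpow hρ (1 - t)) = G at cG
    have hg' : ∀ t, mpow hρ t * H * mpow hρ (1 - t) = G t := fun t => congrFun hg t
    simp only [hg']
    simp only [trace, diag_apply, mul_apply, of_apply]
    have ce : ∀ i j, Continuous fun t => G t i j := fun i j => cG.matrix_elem i j
    rw [intervalIntegral.integral_finsetSum]
    · refine Finset.sum_congr rfl fun i _ => ?_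
      rw [intervalIntegral.integral_finsetSum]
      · refine Finset.sum_congr rfl fun j _ => ?_
        rw [intervalIntegral.integral_mul_const]
      · intro j _
        exact ((ce i j).mul continuous_const).intervalIntegrable _ _
    · intro i _
      exact (continuous_finsetSum _ fun j _ =>
        (ce i j).mul continuous_const).intervalIntegrable _ _
  have hre : ∫ t in (0 : ℝ)..1, ((mpow hρ t * H * mpow hρ (1 - t) * X).trace).re = 1 := by
    have := Complex.reCLM.intervalIntegral_comp_comm (cT.intervalIntegrable (μ := MeasureTheory.volume) 0 1)
    rw [hint] at this
    simpa using this
  have htr : ∀ t : ℝ, ((mpow hρ ((1 - t) / 2) * H * mpow hρ (t / 2))ᴴ *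
      (mpow hρ ((1 - t) / 2) * X * mpow hρ (t / 2))).trace =
      (mpow hρ t * H * mpow hρ (1 - t) * X).trace := by
    intro t
    have e1 : mpow hρ t = mpow hρ (t / 2) * mpow hρ (t / 2) := by rw [mpow_mul]; congr 1; ring
    have e2 : mpow hρ (1 - t) = mpow hρ ((1 - t) / 2) * mpow hρ ((1 - t) / 2) := by
      rw [mpow_mul]; congr 1; ring
    rw [e1, e2]
    simp only [conjTranspose_mul, mpow_herm, hH.eq]
    simp only [← mul_assoc]
    rw [trace_mul_comm]
    simp only [mul_assoc]
  have key : ∀ x : ℝ, 0 ≤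
      (∫ t in (0 : ℝ)..1, hsNormSq (mpow hρ ((1 - t) / 2) * X * mpow hρ (t / 2))) * (x * x)
      + (-2) * x +
      (∫ t in (0 : ℝ)..1, hsNormSq (mpow hρ ((1 - t) / 2) * H * mpow hρ (t / 2))) := by
    intro x
    have h0 : 0 ≤ ∫ t in (0 : ℝ)..1, hsNormSq ((mpow hρ ((1 - t) / 2) * H * mpow hρ (t / 2))
        - (x : ℂ) • (mpow hρ ((1 - t) / 2) * X * mpow hρ (t / 2))) :=
      intervalIntegral.integral_nonneg zero_le_one fun t _ => hsNormSq_nonneg _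
    simp only [hsNormSq_sub, htr] at h0
    have i1 : IntervalIntegrable (fun t : ℝ =>
        hsNormSq (mpow hρ ((1 - t) / 2) * X * mpow hρ (t / 2)) * (x * x))
        MeasureTheory.volume 0 1 := ((cN X).mul continuous_const).intervalIntegrable 0 1
    have i2 : IntervalIntegrable (fun t : ℝ =>
        -2 * ((mpow hρ t * H * mpow hρ (1 - t) * X).trace).re * x)
        MeasureTheory.volume 0 1 :=
      ((continuous_const.mul (Complex.continuous_re.comp cT)).mul
        continuous_const).intervalIntegrable 0 1
    have i3 := (cN H).intervalIntegrable (μ := MeasureTheory.volume) 0 1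
    rw [intervalIntegral.integral_add (by exact i1.add i2) i3, intervalIntegral.integral_add i1 i2,
      intervalIntegral.integral_mul_const, intervalIntegral.integral_mul_const,
      intervalIntegral.integral_const_mul, hre] at h0
    simpa using h0
  have := discrim_le_zero key
  unfold discrim at this
  nlinarith
end

section
/- Relative entropy and quantum Fisher information in the Boltzmann–von Neumann model: let θ ↦ ρ_θ be a family of positive definite Hermitian n×n density matrices such that L(θ) := ln ρ_θ (matrix logarithm defined spectrally) is twice continuously differentiable in θ, and set H(θ) = L'(θ). Then for each θ, lim_{ε→0} ε^{−2} S_rel(ρ_{θ+ε} ‖ ρ_θ) = (1/2) ∫₀¹ Tr(ρ_θ^t H(θ) ρ_θ^{1−t} H(θ)) dt, where S_rel(ρ‖σ) = Tr(ρ(ln ρ − ln σ)) is the Kullback–Leibler quantum relative entropy; i.e., lim_{ε→0} (2/ε²) S_rel(ρ_{θ+ε}‖ρ_θ) equals the Boltzmann–von Neumann quantum Fisher information I(θ) = ∫₀¹ Tr(ρ_θ^t H ρ_θ^{1−t} H) dt. -/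
open Matrix Filter
open scoped ComplexOrder Topology

section Abstract
open NormedSpace

variable {𝔸 : Type*} [NormedRing 𝔸] [NormedAlgebra ℝ 𝔸] [NormedAlgebra ℚ 𝔸] [CompleteSpace 𝔸]

lemma duhamel_aux (τ : 𝔸 →L[ℝ] ℂ) (M X Y : 𝔸) :
    τ (M * exp Y) - τ (M * exp X) =
      ∫ t in (0:ℝ)..1, τ (M * (exp (t • Y) * (Y - X) * exp ((1 - t) • X))) := by
  have hc : Continuous (exp : 𝔸 → 𝔸) := exp_continuous
  have h : ∀ t : ℝ, HasDerivAt (fun t : ℝ => τ (M * (exp (t • Y) * exp ((1 - t) • X))))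
      (τ (M * (exp (t • Y) * (Y - X) * exp ((1 - t) • X)))) t := by
    intro t
    have h1 := hasDerivAt_exp_smul_const (𝕂 := ℝ) Y t
    have h2 := (hasDerivAt_exp_smul_const' (𝕂 := ℝ) X (1 - t)).scomp t
      ((hasDerivAt_id t).const_sub 1)
    have h3 := τ.hasFDerivAt.comp_hasDerivAt t ((h1.mul h2).const_mul M)
    refine h3.congr_deriv ?_
    congr 2
    simp only [Function.comp, neg_smul, one_smul]
    noncomm_ring
  rw [intervalIntegral.integral_eq_sub_of_hasDerivAt (fun t _ => h t)
    (Continuous.intervalIntegrable (by fun_prop) _ _)]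
  simp

lemma relent_repr (τ : 𝔸 →L[ℝ] ℂ) (hτ : ∀ a b, τ (a * b) = τ (b * a)) (A B : 𝔸)
    (hAB : τ (exp B) = τ (exp A)) :
    τ (exp B * (B - A)) = ∫ t in (0:ℝ)..1, ∫ u in (0:ℝ)..1,
      (1 - t) • τ (exp (t • B) * (B - A) *
        (exp (u • ((1 - t) • B)) * (B - A) * exp ((1 - u) • ((1 - t) • A)))) := by
  have hc : Continuous (exp : 𝔸 → 𝔸) := exp_continuous
  have h0 := duhamel_aux τ 1 A B
  simp only [one_mul, hAB, sub_self] at h0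
  have h1 : ∀ t : ℝ, τ (exp B * (B - A)) = τ (exp (t • B) * (B - A) * exp ((1 - t) • B)) := by
    intro t
    rw [hτ (exp (t • B) * (B - A)), ← mul_assoc, ← NormedSpace.exp_add_of_commute]
    · rw [← add_smul]; simp
    · exact ((Commute.refl B).smul_left _).smul_right _
  have h2 : τ (exp B * (B - A)) = ∫ t in (0:ℝ)..1,
      (τ (exp (t • B) * (B - A) * exp ((1 - t) • B)) -
        τ (exp (t • B) * (B - A) * exp ((1 - t) • A))) := by
    rw [intervalIntegral.integral_sub (Continuous.intervalIntegrable (by fun_prop) _ _)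
      (Continuous.intervalIntegrable (by fun_prop) _ _), ← h0]
    simp only [← h1]
    simp
  rw [h2]
  refine intervalIntegral.integral_congr fun t _ => ?_
  rw [duhamel_aux]
  refine intervalIntegral.integral_congr fun u _ => ?_
  simp only [← smul_sub, mul_smul_comm, smul_mul_assoc, map_smul]

lemma simplex_aux (φ : ℝ → ℂ) (hφ : Continuous φ) (hs : ∀ v, φ (1 - v) = φ v) :
    (∫ t in (0:ℝ)..1, ∫ u in (0:ℝ)..1, (1 - t) • φ (u * (1 - t))) =
      (1 / 2 : ℂ) * ∫ t in (0:ℝ)..1, φ t := by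
  have hi : ∀ a b, IntervalIntegrable φ MeasureTheory.volume a b :=
    fun a b => hφ.intervalIntegrable a b
  have h1 : ∀ t : ℝ, (∫ u in (0:ℝ)..1, (1 - t) • φ (u * (1 - t))) = ∫ v in (0:ℝ)..(1 - t), φ v := by
    intro t
    rw [intervalIntegral.integral_smul, intervalIntegral.smul_integral_comp_mul_right]
    simp
  simp only [h1]
  have hcont : Continuous fun t : ℝ => ∫ v in (0:ℝ)..t, φ v :=
    intervalIntegral.continuous_primitive hi 0
  have h2 : (∫ t in (0:ℝ)..1, ∫ v in (0:ℝ)..(1 - t), φ v) = ∫ t in (0:ℝ)..1, ∫ v in (0:ℝ)..t, φ v := by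
    rw [intervalIntegral.integral_comp_sub_left (fun t : ℝ => ∫ v in (0:ℝ)..t, φ v) 1]
    simp
  have h3 : ∀ t : ℝ, (∫ v in (0:ℝ)..(1 - t), φ v) + (∫ v in (0:ℝ)..t, φ v)
      = ∫ v in (0:ℝ)..1, φ v := by
    intro t
    have : (∫ v in (0:ℝ)..t, φ v) = ∫ v in (1 - t)..1, φ v := by
      have := intervalIntegral.integral_comp_sub_left (a := 0) (b := t) φ 1
      simp only [hs, sub_zero] at this
      exact this
    rw [this, intervalIntegral.integral_add_adjacent_intervals (hi _ _) (hi _ _)]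
  have h4 : (∫ t in (0:ℝ)..1, ∫ v in (0:ℝ)..(1 - t), φ v) +
      (∫ t in (0:ℝ)..1, ∫ v in (0:ℝ)..t, φ v) = ∫ v in (0:ℝ)..1, φ v := by
    rw [← intervalIntegral.integral_add
      (Continuous.intervalIntegrable
        (hcont.comp' (by fun_prop : Continuous fun t : ℝ => 1 - t)) _ _)
      (hcont.intervalIntegrable _ _)]
    simp only [h3]
    simp
  rw [← h2] at h4
  linear_combination (1/2 : ℂ) * h4

lemma relent_limit (τ : 𝔸 →L[ℝ] ℂ) (hτ : ∀ a b, τ (a * b) = τ (b * a)) (L : ℝ → 𝔸) (H : 𝔸)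
    (θ : ℝ) (hL : HasDerivAt L H θ) (h1 : ∀ θ, τ (exp (L θ)) = 1) :
    Tendsto (fun ε : ℝ => ((ε : ℂ) ^ 2)⁻¹ * τ (exp (L (θ + ε)) * (L (θ + ε) - L θ))) (𝓝[≠] 0)
      (𝓝 ((1 / 2 : ℂ) * ∫ t in (0:ℝ)..1, τ (exp (t • L θ) * H * exp ((1 - t) • L θ) * H))) := by
  have hc : Continuous (exp : 𝔸 → 𝔸) := exp_continuous
  set A := L θ with hA
  let G : 𝔸 × 𝔸 → ℂ := fun p => ∫ t in (0:ℝ)..1, ∫ u in (0:ℝ)..1,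
      (1 - t) • τ (exp (t • p.1) * p.2 *
        (exp (u • ((1 - t) • p.1)) * p.2 * exp ((1 - u) • ((1 - t) • A))))
  have hG : Continuous G := by
    apply intervalIntegral.continuous_parametric_intervalIntegral_of_continuous'
    apply intervalIntegral.continuous_parametric_intervalIntegral_of_continuous'
    simp only [Function.uncurry_def]
    fun_prop
  have hB : Tendsto (fun ε : ℝ => L (θ + ε)) (𝓝[≠] 0) (𝓝 A) := by
    have : Tendsto (fun ε : ℝ => θ + ε) (𝓝[≠] 0) (𝓝 θ) := by
      have : ContinuousAt (fun ε : ℝ => θ + ε) 0 := by fun_prop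
      simpa [ContinuousAt] using this.mono_left nhdsWithin_le_nhds
    exact hL.continuousAt.tendsto.comp this
  have hD : Tendsto (fun ε : ℝ => ε⁻¹ • (L (θ + ε) - A)) (𝓝[≠] 0) (𝓝 H) :=
    hasDerivAt_iff_tendsto_slope_zero.1 hL
  have hlim := (hG.tendsto (A, H)).comp (hB.prodMk_nhds hD)
  have hGA : G (A, H) = (1 / 2 : ℂ) *
      ∫ t in (0:ℝ)..1, τ (exp (t • A) * H * exp ((1 - t) • A) * H) := by
    rw [← simplex_aux (fun t => τ (exp (t • A) * H * exp ((1 - t) • A) * H)) (by fun_prop)]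
    · refine intervalIntegral.integral_congr fun t _ => ?_
      refine intervalIntegral.integral_congr fun u _ => ?_
      simp only []
      congr 1
      have e : exp ((1 - u * (1 - t)) • A) = exp ((1 - u) • ((1 - t) • A)) * exp (t • A) := by
        rw [← NormedSpace.exp_add_of_commute]
        · rw [smul_smul, ← add_smul]; congr 2; ring
        · exact (((Commute.refl A).smul_left _).smul_left _).smul_right _
      have c := hτ (exp (t • A) * H)
        (exp ((u * (1 - t)) • A) * H * exp ((1 - u) • ((1 - t) • A)))
      rw [e, smul_smul, c]
      simp only [mul_assoc]
    · intro v
      simp only [sub_sub_cancel]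
      rw [mul_assoc, hτ, ← mul_assoc]
  rw [← hGA]
  refine hlim.congr' ?_
  filter_upwards [self_mem_nhdsWithin] with ε hε
  rw [relent_repr τ hτ A (L (θ + ε)) (by rw [h1, hA, h1])]
  simp only [Function.comp, G]
  rw [← intervalIntegral.integral_const_mul]
  refine intervalIntegral.integral_congr fun t _ => ?_
  rw [← intervalIntegral.integral_const_mul]
  refine intervalIntegral.integral_congr fun u _ => ?_
  simp only [mul_smul_comm, smul_mul_assoc, map_smul, Complex.real_smul]
  push_cast
  ring

end Abstract

lemma mpow_eq_exp {n : ℕ} {ρ : Matrix (Fin n) (Fin n) ℂ} (hρ : ρ.PosDef) (s : ℝ) :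
    mpow hρ s = NormedSpace.exp (s • hρ.1.cfc Real.log) := by
  have hU := (Unitary.toUnits hρ.1.eigenvectorUnitary)
  have key := Matrix.exp_units_conj (Unitary.toUnits hρ.1.eigenvectorUnitary)
    (diagonal (fun i => ((s * Real.log (hρ.1.eigenvalues i) : ℝ) : ℂ)))
  have h2 : s • hρ.1.cfc Real.log = (Unitary.toUnits hρ.1.eigenvectorUnitary : Matrix (Fin n) (Fin n) ℂ) *
     (diagonal (fun i => ((s * Real.log (hρ.1.eigenvalues i) : ℝ) : ℂ))) *
      ((Unitary.toUnits hρ.1.eigenvectorUnitary)⁻¹ : (Matrix (Fin n) (Fin n) ℂ)ˣ) := by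
    rw [Matrix.IsHermitian.cfc, Unitary.conjStarAlgAut_apply]
    have : diagonal (fun i => ((s * Real.log (hρ.1.eigenvalues i) : ℝ) : ℂ)) =
      s • diagonal (RCLike.ofReal ∘ Real.log ∘ hρ.1.eigenvalues : Fin n → ℂ) := by
      ext i j
      by_cases h : i = j <;> simp [h, diagonal]
    rw [this, mul_smul_comm, smul_mul_assoc]
    rfl
  rw [h2]
  refine Eq.trans ?_ key.symm
  rw [mpow, Matrix.IsHermitian.cfc, Unitary.conjStarAlgAut_apply, Matrix.exp_diagonal]
  have : (RCLike.ofReal ∘ (fun x : ℝ => x ^ s) ∘ hρ.1.eigenvalues : Fin n → ℂ) =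
      NormedSpace.exp (fun i => ((s * Real.log (hρ.1.eigenvalues i) : ℝ) : ℂ)) := by
    ext i
    rw [Pi.coe_exp, ← Complex.exp_eq_exp_ℂ, ← Complex.ofReal_exp, mul_comm,
      ← Real.rpow_def_of_pos (hρ.eigenvalues_pos i)]
    rfl
  rw [this]
  rfl

lemma exp_log_eq {n : ℕ} {ρ : Matrix (Fin n) (Fin n) ℂ} (hρ : ρ.PosDef) :
    NormedSpace.exp (hρ.1.cfc Real.log) = ρ := by
  have := mpow_eq_exp hρ 1
  rw [one_smul] at this
  rw [← this, mpow]
  conv_rhs => rw [hρ.1.spectral_theorem]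
  simp [Matrix.IsHermitian.cfc, Function.comp_def]

lemma slope_aux {n : ℕ} (L : ℝ → Matrix (Fin n) (Fin n) ℂ) (H : Matrix (Fin n) (Fin n) ℂ)
    (θ : ℝ) (hH : ∀ i j, HasDerivAt (fun t => L t i j) (H i j) θ) :
    Tendsto (fun ε : ℝ => ε⁻¹ • (L (θ + ε) - L θ)) (𝓝[≠] 0) (𝓝 H) := by
  refine tendsto_pi_nhds.2 fun i => tendsto_pi_nhds.2 fun j => ?_
  have h := hasDerivAt_iff_tendsto_slope_zero.1 (hH i j)
  refine h.congr fun ε => ?_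
  rw [Matrix.smul_apply, Matrix.sub_apply]

open scoped Matrix.Norms.Operator in
lemma matrix_limit {n : ℕ} (L : ℝ → Matrix (Fin n) (Fin n) ℂ) (H : Matrix (Fin n) (Fin n) ℂ)
    (θ : ℝ) (hH : ∀ i j, HasDerivAt (fun t => L t i j) (H i j) θ)
    (h1 : ∀ θ, (NormedSpace.exp (L θ)).trace = 1) :
    Tendsto (fun ε : ℝ => ((ε : ℂ) ^ 2)⁻¹ *
        (NormedSpace.exp (L (θ + ε)) * (L (θ + ε) - L θ)).trace) (𝓝[≠] 0)
      (𝓝 ((1 / 2 : ℂ) * ∫ t in (0:ℝ)..1, (NormedSpace.exp (t • L θ) * H *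
        NormedSpace.exp ((1 - t) • L θ) * H).trace)) := by
  let _ : NormedAlgebra ℚ (Matrix (Fin n) (Fin n) ℂ) := NormedAlgebra.restrictScalars ℚ ℝ _
  let τ : Matrix (Fin n) (Fin n) ℂ →L[ℝ] ℂ :=
    LinearMap.toContinuousLinearMap (Matrix.traceLinearMap (Fin n) ℝ ℂ)
  have hd : HasDerivAt L H θ := by
    refine hasDerivAt_iff_tendsto_slope_zero.2 ?_
    exact slope_aux L H θ hH
  have hτ : ∀ M, τ M = M.trace := fun M => rfl
  have hτ' : ∀ a b, τ (a * b) = τ (b * a) := fun a b => by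
    rw [hτ, hτ, Matrix.trace_mul_comm a b]
  have h1' : ∀ θ, τ (NormedSpace.exp (L θ)) = 1 := fun θ => by rw [hτ, h1]
  have key := relent_limit τ hτ' L H θ hd h1'
  exact key

/-- Relative entropy and quantum Fisher information in the Boltzmann–von Neumann model:
let `θ ↦ ρ_θ` be a family of positive definite density matrices whose matrix logarithm
`L(θ) = ln ρ_θ` (defined spectrally) is twice continuously differentiable (entrywise) with
derivative `H(θ) = L'(θ)`.  Then
`lim_{ε→0} ε^{−2} S_rel(ρ_{θ+ε} ‖ ρ_θ) = (1/2) ∫₀¹ Tr(ρ_θ^t H(θ) ρ_θ^{1−t} H(θ)) dt`,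
where `S_rel(ρ‖σ) = Tr(ρ(ln ρ − ln σ))` is the Kullback–Leibler quantum relative
entropy. -/
theorem relEntropy_qfi_bvn {n : ℕ}
    (ρ L H : ℝ → Matrix (Fin n) (Fin n) ℂ)
    (hρ : ∀ θ, (ρ θ).PosDef)
    (htrρ : ∀ θ, (ρ θ).trace = 1)
    (hL : ∀ θ, L θ = (hρ θ).1.cfc Real.log)
    (hLsmooth : ∀ i j : Fin n, ContDiff ℝ 2 (fun θ => L θ i j))
    (hH : ∀ (i j : Fin n) (θ : ℝ), HasDerivAt (fun t => L t i j) (H θ i j) θ) :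
    ∀ θ : ℝ,
      Tendsto
        (fun ε : ℝ => ((ε : ℂ) ^ 2)⁻¹ * ((ρ (θ + ε)) * (L (θ + ε) - L θ)).trace)
        (𝓝[≠] (0 : ℝ))
        (𝓝 ((1 / 2 : ℂ) *
          ∫ t in (0 : ℝ)..1,
            (mpow (hρ θ) t * H θ * mpow (hρ θ) (1 - t) * H θ).trace)) := by
  intro θ
  have hexp : ∀ θ, NormedSpace.exp (L θ) = ρ θ := fun θ => by rw [hL]; exact exp_log_eq (hρ θ)
  have h := matrix_limit L (H θ) θ (fun i j => hH i j θ) (fun θ => by rw [hexp, htrρ])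
  simp only [mpow_eq_exp, ← hL]
  simpa only [hexp] using h
end
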